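/- arXiv:2006.02880 — 2 statements merged into one kernel-verified Lean document; each statement's English description precedes it below -/
import Mathlib

section
/- Let κ and λ be infinite cardinals with κ ≤ λ ≤ 2^κ. Then there exist two families C₁ and C₂ of mutually non-homeomorphic compact T₁-spaces of cardinality κ and weight λ such that |C₁| = |C₂| = 2^λ, all spaces in C₁ are scattered, all spaces in C₂ are connected and locally connected, and if κ ≥ 𝔠 (where 𝔠 = 2^{ℵ₀}) then all spaces in C₂ are moreover arcwise connected and locally arcwise connected. -/
open Cardinal Set Topology

/-- The weight of a topological space: the least cardinality of a basis for its topology. -/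
noncomputable def tweight (X : Type) [TopologicalSpace X] : Cardinal :=
  sInf { c : Cardinal | ∃ B : Set (Set X), TopologicalSpace.IsTopologicalBasis B ∧ #B = c }

/-- A space is scattered if every nonempty subset has a point isolated in that subset. -/
def Scattered (X : Type) [TopologicalSpace X] : Prop :=
  ∀ S : Set X, S.Nonempty → ∃ x ∈ S, ∃ U : Set X, IsOpen U ∧ U ∩ S = {x}

/-- Strong zero-dimensionality: every closed set contained in an open set can be
separated from its complement by an open-closed set. -/
def StronglyZeroDimensional (X : Type) [TopologicalSpace X] : Prop :=
  ∀ A U : Set X, IsClosed A → IsOpen U → A ⊆ U →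
    ∃ V : Set X, IsOpen V ∧ IsClosed V ∧ A ⊆ V ∧ V ⊆ U

/-- A space is hereditarily paracompact if every subspace is paracompact. -/
def HereditarilyParacompact (X : Type) [TopologicalSpace X] : Prop :=
  ∀ S : Set X, ParacompactSpace S

/-- A space is perfectly normal iff it is normal and every closed set is a Gδ-set. -/
def PerfectlyNormal (X : Type) [TopologicalSpace X] : Prop :=
  NormalSpace X ∧ ∀ C : Set X, IsClosed C → IsGδ C

/-- A Hausdorff space is almost discrete iff the complement of some point is discrete. -/
def AlmostDiscrete (X : Type) [TopologicalSpace X] : Prop :=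
  T2Space X ∧ ∃ x : X, DiscreteTopology ({x}ᶜ : Set X)

/-- A space is almost metrizable iff it is perfectly normal and the complement of some
point is metrizable. -/
def AlmostMetrizable (X : Type) [TopologicalSpace X] : Prop :=
  PerfectlyNormal X ∧ ∃ x : X, TopologicalSpace.MetrizableSpace ({x}ᶜ : Set X)

/-- There is a family of `n` pairwise non-homeomorphic spaces, all with property `P`. -/
def ExistsNonHomeoFamily (n : Cardinal) (P : (X : Type) → TopologicalSpace X → Prop) : Prop :=
  ∃ (ι : Type) (F : ι → Type) (t : (i : ι) → TopologicalSpace (F i)),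
    #ι = n ∧ (∀ i, P (F i) (t i)) ∧
      ∀ i j, i ≠ j → IsEmpty (@Homeomorph (F i) (F j) (t i) (t j))

/-- Every family of pairwise non-homeomorphic spaces with property `P` has at most `n`
members. -/
def NonHomeoUpperBound (n : Cardinal) (P : (X : Type) → TopologicalSpace X → Prop) : Prop :=
  ∀ (ι : Type) (F : ι → Type) (t : (i : ι) → TopologicalSpace (F i)),
    (∀ i, P (F i) (t i)) →
    (∀ i j, i ≠ j → IsEmpty (@Homeomorph (F i) (F j) (t i) (t j))) → #ι ≤ n

/-- There are precisely `n` spaces with property `P`, up to homeomorphism. -/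
def PreciselyNonHomeo (n : Cardinal) (P : (X : Type) → TopologicalSpace X → Prop) : Prop :=
  ExistsNonHomeoFamily n P ∧ NonHomeoUpperBound n P

/-- A subset `V` is arcwise connected (within the ambient space) iff any two distinct
points of `V` are joined by an arc, i.e. a homeomorphic embedding of `[0,1]`, whose
image lies in `V`. -/
def IsArcConnectedSet {X : Type} [TopologicalSpace X] (V : Set X) : Prop :=
  ∀ x ∈ V, ∀ y ∈ V, x ≠ y → ∃ f : unitInterval → X,
    Topology.IsEmbedding f ∧ Set.range f ⊆ V ∧ f 0 = x ∧ f 1 = y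

/-- A space is arcwise connected iff any two distinct points are joined by an arc. -/
def ArcwiseConnected (X : Type) [TopologicalSpace X] : Prop :=
  ∀ x y : X, x ≠ y → ∃ f : unitInterval → X,
    Topology.IsEmbedding f ∧ f 0 = x ∧ f 1 = y

/-- A space is locally arcwise connected iff every point has a neighborhood basis
consisting of arcwise connected sets. -/
def LocallyArcwiseConnected (X : Type) [TopologicalSpace X] : Prop :=
  ∀ x : X, ∀ U ∈ nhds x, ∃ V ∈ nhds x, V ⊆ U ∧ IsArcConnectedSet V


/-! ### General lemmas -/

lemma tweight_le_of_basis {X : Type} [TopologicalSpace X] {B : Set (Set X)} {c : Cardinal}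
    (hB : TopologicalSpace.IsTopologicalBasis B) (hc : #B ≤ c) : tweight X ≤ c := by
  have h : tweight X ≤ #B := csInf_le' (show #B ∈ { c : Cardinal | ∃ B : Set (Set X),
    TopologicalSpace.IsTopologicalBasis B ∧ #B = c } from ⟨B, hB, rfl⟩)
  exact h.trans hc

lemma exists_basis_tweight (X : Type) [TopologicalSpace X] :
    ∃ B : Set (Set X), TopologicalSpace.IsTopologicalBasis B ∧ #B = tweight X :=
  csInf_mem (s := { c : Cardinal | ∃ B : Set (Set X),
    TopologicalSpace.IsTopologicalBasis B ∧ #B = c })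
    ⟨#{U : Set X | IsOpen U}, {U : Set X | IsOpen U},
      TopologicalSpace.isTopologicalBasis_opens, rfl⟩

lemma tweight_le_of_inducing {X Z : Type} [TopologicalSpace X] [TopologicalSpace Z] {f : X → Z}
    (hf : IsInducing f) : tweight X ≤ tweight Z := by
  obtain ⟨B, hB, hc⟩ := exists_basis_tweight Z
  rw [← hc]
  exact tweight_le_of_basis (hB.isInducing hf) mk_image_le

lemma compact_of_core {Z : Type} [TopologicalSpace Z] (K : Set Z) (hK : IsCompact K)
    (h : ∀ U : Set Z, IsOpen U → K ⊆ U → IsCompact Uᶜ) : CompactSpace Z := by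
  refine ⟨isCompact_of_finite_subcover ?_⟩
  intro ι U hU hc
  obtain ⟨t, ht⟩ := hK.elim_finite_subcover U hU ((subset_univ _).trans hc)
  obtain ⟨t', ht'⟩ := (h _ (isOpen_biUnion fun i (_ : i ∈ t) => hU i) ht).elim_finite_subcover U hU
    ((subset_univ _).trans hc)
  classical
  refine ⟨t ∪ t', fun z _ => ?_⟩
  by_cases hz : z ∈ ⋃ i ∈ t, U i
  · simp only [mem_iUnion] at hz ⊢
    obtain ⟨i, hi, hz⟩ := hz
    exact ⟨i, Finset.mem_union_left _ hi, hz⟩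
  · have := ht' hz
    simp only [mem_iUnion] at this ⊢
    obtain ⟨i, hi, hz⟩ := this
    exact ⟨i, Finset.mem_union_right _ hi, hz⟩

lemma homeo_restrict {X Y Z W : Type} [TopologicalSpace X] [TopologicalSpace Y]
    [TopologicalSpace Z] [TopologicalSpace W] {i : X → Z} {j : Y → W} (hi : IsEmbedding i)
    (hj : IsEmbedding j) (h : Z ≃ₜ W) (hh : ∀ z, z ∈ range i ↔ h z ∈ range j) :
    Nonempty (X ≃ₜ Y) := by
  have e : h '' range i = range j := by
    ext w
    constructor
    · rintro ⟨z, hz, rfl⟩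
      exact (hh z).1 hz
    · intro hw
      refine ⟨h.symm w, (hh _).2 (by simpa using hw), by simp⟩
  exact ⟨hi.toHomeomorph.trans ((h.image _).trans ((Homeomorph.setCongr e).trans
    hj.toHomeomorph.symm))⟩

/-- Independent families. -/
lemma exists_indep (I T : Type) [Infinite I] (h : #T ≤ 2 ^ #I) :
    ∃ A : T → Set I, ∀ (J : Finset T) (i : T), i ∉ J → ∃ a, (∀ j ∈ J, a ∈ A j) ∧ a ∉ A i := by
  classical
  have e1 : #(Finset I × Finset (Finset I)) = #I := by
    rw [mk_prod, mk_finset_of_infinite, mk_finset_of_infinite, mk_finset_of_infinite]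
    simp [mul_eq_self (aleph0_le_mk I)]
  obtain ⟨e⟩ := Cardinal.eq.1 e1
  rw [← mk_set] at h
  obtain ⟨Y⟩ := h
  refine ⟨fun t => e '' {x | x.1.filter (· ∈ Y t) ∈ x.2}, ?_⟩
  intro J i hi
  have hd : ∀ j : T, j ≠ i → ∃ d, ¬ (d ∈ Y j ↔ d ∈ Y i) := by
    intro j hj
    by_contra hcon
    push Not at hcon
    exact hj (Y.injective (Set.ext hcon))
  choose! d hd using hd
  let F := J.image d
  refine ⟨e (F, J.image fun j => F.filter (· ∈ Y j)), ?_, ?_⟩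
  · intro j hj
    exact ⟨_, Finset.mem_image_of_mem (fun j => F.filter (· ∈ Y j)) hj, rfl⟩
  · rintro ⟨x, hx, hxe⟩
    obtain rfl := e.injective hxe
    simp only [mem_ofPred_eq, Finset.mem_image] at hx
    obtain ⟨j, hj, hjF⟩ := hx
    have hji : j ≠ i := by rintro rfl; exact hi hj
    apply hd j hji
    have := Finset.ext_iff.1 hjF (d j)
    simpa [F, Finset.mem_image_of_mem d hj, show ∃ a ∈ J, d a = d j from ⟨j, hj, rfl⟩] using this

/-! ### The scattered spaces -/

inductive SX {I T : Type} (A : T → Set I) (S : Set T) : Type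
  | v (a : I) (n : ℕ) (b : Bool)
  | p
  | q

namespace SX

set_option linter.unusedSectionVars false

variable {I T : Type} [LinearOrder I] {A : T → Set I} {S : Set T}

def low (a : I) : Set (SX A S) := {x | ∃ c m, x = v c m false ∧ c < a}

def fl (J : Finset T) : Set (SX A S) := {x | ∀ c m, x = v c m true → ∀ j ∈ J, c ∈ A j}

def Nb : SX A S → Set (SX A S) → Prop
  | v a _ _, U => (low a \ U).Finite
  | p, U => ∃ J : Finset T, (J : Set T) ⊆ S ∧ (fl J \ U).Finite
  | q, U => Uᶜ.Finite

lemma Nb.mono {x : SX A S} {U V : Set (SX A S)} (h : Nb x U) (hUV : U ⊆ V) : Nb x V := by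
  cases x with
  | v a n b => exact Set.Finite.subset h (sdiff_subset_sdiff_right hUV)
  | p =>
    obtain ⟨J, hJ, hf⟩ := h
    exact ⟨J, hJ, hf.subset (sdiff_subset_sdiff_right hUV)⟩
  | q => exact Set.Finite.subset h (compl_subset_compl.2 hUV)

lemma Nb.inter {x : SX A S} {U V : Set (SX A S)} (h : Nb x U) (h' : Nb x V) : Nb x (U ∩ V) := by
  classical
  cases x with
  | v a n b =>
    simp only [Nb, sdiff_inter] at *
    exact h.union h'
  | p =>
    obtain ⟨J, hJ, hf⟩ := h
    obtain ⟨J', hJ', hf'⟩ := h'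
    refine ⟨J ∪ J', by simp [hJ, hJ'], (hf.union hf').subset ?_⟩
    rintro y ⟨hy, hyn⟩
    by_cases hyU : y ∈ U
    · refine Or.inr ⟨fun c m hc j hj => hy c m hc j (Finset.mem_union_right _ hj),
        fun hV => hyn ⟨hyU, hV⟩⟩
    · exact Or.inl ⟨fun c m hc j hj => hy c m hc j (Finset.mem_union_left _ hj), hyU⟩
  | q =>
    simp only [Nb, compl_inter] at *
    exact h.union h'

lemma Nb.of_cofinite {x : SX A S} {U : Set (SX A S)} (h : Uᶜ.Finite) : Nb x U := by
  cases x with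
  | v a n b => exact Set.Finite.subset h fun y hy => hy.2
  | p => exact ⟨∅, by simp, Set.Finite.subset h fun y hy => hy.2⟩
  | q => exact h

instance : TopologicalSpace (SX A S) where
  IsOpen U := ∀ x ∈ U, Nb x U
  isOpen_univ := fun x _ => Nb.of_cofinite (by simp)
  isOpen_inter := fun U V hU hV x hx => (hU x hx.1).inter (hV x hx.2)
  isOpen_sUnion := by
    rintro s hs x ⟨U, hU, hx⟩
    exact (hs U hU x hx).mono (subset_sUnion_of_mem hU)

lemma isOpen_def {U : Set (SX A S)} : IsOpen U ↔ ∀ x ∈ U, Nb x U := Iff.rfl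

lemma isOpen_cofinite {U : Set (SX A S)} (h : Uᶜ.Finite) : IsOpen U :=
  fun _ _ => Nb.of_cofinite h

instance : CompactSpace (SX A S) := by
  refine compact_of_core {q} isCompact_singleton fun U hU hq => ?_
  exact Set.Finite.isCompact (hU q (hq rfl))

instance : T1Space (SX A S) :=
  ⟨fun x => ⟨isOpen_cofinite (by simp)⟩⟩

def rk : SX A S → WithTop I
  | v a _ _ => (a : WithTop I)
  | p => ⊤
  | q => ⊤

lemma rk_nhd (x : SX A S) : ∃ U, IsOpen U ∧ x ∈ U ∧ ∀ y ∈ U, y ≠ x → rk y < rk x := by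
  cases x with
  | v a n b =>
    refine ⟨insert (v a n b) (low a), ?_, mem_insert _ _, ?_⟩
    · rintro x hx
      rcases hx with rfl | ⟨c, m, rfl, hc⟩
      · have : (low a \ insert (v a n b) (low a) : Set (SX A S)) = ∅ :=
          sdiff_eq_empty.2 (subset_insert _ _)
        simp [Nb, this]
      · have : (low c \ insert (v a n b) (low a) : Set (SX A S)) = ∅ := by
          refine sdiff_eq_empty.2 (Subset.trans ?_ (subset_insert _ _))
          rintro _ ⟨c', m', rfl, hc'⟩
          exact ⟨c', m', rfl, hc'.trans hc⟩
        simp [Nb, this]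
    · rintro y (rfl | ⟨c, m, rfl, hc⟩) hne
      · exact absurd rfl hne
      · simpa [rk] using hc
  | p =>
    refine ⟨{q}ᶜ, isOpen_cofinite (by simp), by simp, ?_⟩
    rintro (_ | _ | _) h1 h2 <;> simp_all [rk]
  | q =>
    refine ⟨{p}ᶜ, isOpen_cofinite (by simp), by simp, ?_⟩
    rintro (_ | _ | _) h1 h2 <;> simp_all [rk]

lemma infinite_v (a : I) (b : Bool) : (range fun n : ℕ => (v a n b : SX A S)).Infinite :=
  infinite_range_of_injective fun m n h => by simpa using h

lemma rk_exists {x : SX A S} {U : Set (SX A S)} (hU : IsOpen U) (hx : x ∈ U) {β : WithTop I}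
    (hβ : β < rk x) : ∃ y ∈ U, rk y = β := by
  obtain ⟨b, rfl⟩ : ∃ b : I, (b : WithTop I) = β := by
    exact ⟨_, WithTop.coe_untop _ (ne_top_of_lt hβ)⟩
  by_contra hcon
  push Not at hcon
  have hsub : range (fun n : ℕ => (v b n false : SX A S)) ⊆ Uᶜ := by
    rintro _ ⟨n, rfl⟩ hn
    exact hcon _ hn rfl
  have := hU x hx
  refine infinite_v (A := A) (S := S) b false ?_
  cases x with
  | v a n b' =>
    refine Set.Finite.subset this fun y hy => ⟨?_, hsub hy⟩
    obtain ⟨n, rfl⟩ := hy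
    exact ⟨b, n, rfl, by simpa [rk] using hβ⟩
  | p =>
    obtain ⟨J, -, hf⟩ := this
    refine Set.Finite.subset hf fun y hy => ⟨?_, hsub hy⟩
    obtain ⟨n, rfl⟩ := hy
    intro c m h
    simp at h
  | q => exact Set.Finite.subset this hsub

lemma scattered [WellFoundedLT I] : Scattered (SX A S) := by
  intro s hs
  obtain ⟨x, hx, hmin⟩ := WellFounded.has_min (InvImage.wf rk (wellFounded_lt (α := WithTop I))) s hs
  obtain ⟨U, hU, hxU, h⟩ := rk_nhd x
  refine ⟨x, hx, U, hU, ?_⟩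
  ext y
  constructor
  · rintro ⟨hy, hys⟩
    by_contra hne
    exact hmin y hys (h y hy hne)
  · rintro rfl
    exact ⟨hxU, hx⟩

lemma rk_homeo [WellFoundedLT I] {S' : Set T} (h : SX A S ≃ₜ SX A S') (x : SX A S) :
    rk (h x) = rk x := by
  suffices H : ∀ α : WithTop I, ∀ x : SX A S, rk x = α ↔ rk (h x) = α from (H _ x).1 rfl
  intro α
  induction α using WellFoundedLT.induction with
  | ind α ih =>
  intro x
  constructor
  · intro hx
    by_contra hne
    rcases lt_or_gt_of_ne hne with hlt | hgt
    · rw [((ih _ hlt x).2 rfl)] at hx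
      exact hlt.ne hx
    · obtain ⟨U, hU, hxU, hh⟩ := rk_nhd x
      obtain ⟨y, hy, hyr⟩ := rk_exists (x := h x) (U := h.symm ⁻¹' U)
        (hU.preimage h.symm.continuous) (by simpa using hxU) hgt
      have hne : h.symm y ≠ x := by
        rintro rfl
        simp at hne
        exact hne hyr
      have h3 := hh _ hy hne
      rw [hx] at h3
      have := (ih _ h3 (h.symm y)).1 rfl
      simp only [Homeomorph.apply_symm_apply] at this
      exact h3.ne (this ▸ hyr)
  · intro hx
    by_contra hne
    rcases lt_or_gt_of_ne hne with hlt | hgt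
    · have := ((ih _ hlt x).1 rfl)
      rw [hx] at this
      exact hlt.ne this.symm
    · obtain ⟨U, hU, hxU, hh⟩ := rk_nhd (h x)
      obtain ⟨y, hy, hyr⟩ := rk_exists (x := x) (U := h ⁻¹' U)
        (hU.preimage h.continuous) hxU hgt
      have hne : h y ≠ h x := by
        intro e
        obtain rfl := h.injective e
        exact hne hyr
      have h3 := hh _ hy hne
      rw [hx] at h3
      have := (ih _ h3 y).2 rfl
      exact h3.ne (this ▸ hyr)

/-- the basic neighbourhood of `p` given by `i`. -/
def bn (J : Finset T) : Set (SX A S) := fl J \ {q}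

lemma isOpen_bn {J : Finset T} (hJ : (J : Set T) ⊆ S) : IsOpen (bn J : Set (SX A S)) := by
  rintro x ⟨hx, hxq⟩
  cases x with
  | v a n b =>
    have : (low a \ bn J : Set (SX A S)) = ∅ := by
      refine sdiff_eq_empty.2 ?_
      rintro _ ⟨c', m', rfl, hc'⟩
      refine ⟨?_, by simp⟩
      intro c m h
      simp at h
    simp [Nb, this]
  | p =>
    refine ⟨J, hJ, (finite_singleton q).subset ?_⟩
    rintro x ⟨h1, h2⟩
    by_contra h3
    exact h2 ⟨h1, h3⟩
  | q => exact absurd rfl hxq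

lemma p_mem_bn (J : Finset T) : (p : SX A S) ∈ (bn J : Set (SX A S)) := by
  refine ⟨?_, by simp⟩
  intro c m h
  simp at h

def Indep (A : T → Set I) : Prop :=
  ∀ (J : Finset T) (i : T), i ∉ J → ∃ a, (∀ j ∈ J, a ∈ A j) ∧ a ∉ A i

lemma v_notMem_bn {i : T} {a : I} (ha : a ∉ A i) (n : ℕ) :
    (v a n true : SX A S) ∉ (bn {i} : Set (SX A S)) := by
  rintro ⟨h, -⟩
  exact ha (h a n rfl i (by simp))

lemma homeo_p [WellFoundedLT I] (hA : Indep A) {S' : Set T} (hS : S.Nonempty)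
    (h : SX A S ≃ₜ SX A S') : h p = p := by
  have hr := rk_homeo h p
  obtain ⟨i, hi⟩ := hS
  obtain ⟨a, -, ha⟩ := hA ∅ i (by simp)
  rcases hh : h p with ⟨a, n, b⟩ | _ | _
  · simp [hh, rk] at hr
  · rfl
  · exfalso
    have := (isOpen_bn (A := A) (S := S) (J := {i}) (by simpa using hi)).preimage h.symm.continuous
    have h2 := this q (by simp [← hh, p_mem_bn])
    refine (infinite_v (A := A) (S := S) a true).image h.injective.injOn (Set.Finite.subset h2 ?_)
    rintro _ ⟨_, ⟨n, rfl⟩, rfl⟩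
    simpa using v_notMem_bn ha n

lemma homeo_subset [WellFoundedLT I] (hA : Indep A) {S' : Set T}
    (h : SX A S ≃ₜ SX A S') : S ⊆ S' := by
  intro i hi
  by_contra hi'
  have hp := homeo_p hA ⟨i, hi⟩ h
  have := (isOpen_bn (A := A) (S := S) (J := {i}) (by simpa using hi)).preimage h.symm.continuous
  obtain ⟨J, hJ, hf⟩ := this p (by simp [← hp, p_mem_bn])
  obtain ⟨a, ha, hai⟩ := hA J i fun hh => hi' (hJ hh)
  refine (infinite_v (A := A) (S := S) a true).image h.injective.injOn (Set.Finite.subset hf ?_)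
  rintro _ ⟨_, ⟨n, rfl⟩, rfl⟩
  refine ⟨?_, by simpa using v_notMem_bn hai n⟩
  intro c m hc j hj
  have := rk_homeo h (v a n true)
  rw [hc] at this
  simp [rk] at this
  rw [this]
  exact ha j hj

lemma le_tweight (hA : Indep A) [Infinite S] : #S ≤ tweight (SX A S) := by
  obtain ⟨B, hB, hc⟩ := exists_basis_tweight (SX A S)
  rw [← hc]
  have H : ∀ i : S, ∃ b : B, p ∈ (b : Set (SX A S)) ∧ (b : Set (SX A S)) ⊆ bn {i.1} := by
    intro i
    obtain ⟨b, hb, h1, h2⟩ := hB.exists_subset_of_mem_open (p_mem_bn (A := A) (S := S) {i.1})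
      (isOpen_bn (by simp))
    exact ⟨⟨b, hb⟩, h1, h2⟩
  choose f hf1 hf2 using H
  by_contra hlt
  push Not at hlt
  obtain ⟨b, hb⟩ := exists_infinite_fiber f hlt
  obtain ⟨i0, hi0⟩ := hb.nonempty
  obtain ⟨J, hJ, hJf⟩ := hB.isOpen b.2 p (by
    have := hf1 i0
    rwa [show f i0 = b from hi0] at this)
  refine (Set.infinite_coe_iff.1 hb) ?_
  refine Set.Finite.of_finite_image (f := Subtype.val)
    ((J.finite_toSet).subset ?_) Subtype.val_injective.injOn
  rintro _ ⟨i, hi, rfl⟩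
  by_contra hiJ
  obtain ⟨a, ha, hai⟩ := hA J i.1 (by simpa using hiJ)
  refine infinite_v (A := A) (S := S) a true (Set.Finite.subset hJf ?_)
  rintro _ ⟨n, rfl⟩
  refine ⟨?_, fun hh => v_notMem_bn hai n (hf2 i ?_)⟩
  · intro c m hc j hj
    simp at hc
    rw [← hc.1]
    exact ha j hj
  · rwa [(hi : f i = b)]

def eqv : SX A S ≃ (I × ℕ × Bool) ⊕ Bool where
  toFun
    | v a n b => Sum.inl (a, n, b)
    | p => Sum.inr true
    | q => Sum.inr false
  invFun
    | Sum.inl (a, n, b) => v a n b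
    | Sum.inr true => p
    | Sum.inr false => q
  left_inv x := by cases x <;> rfl
  right_inv x := by rcases x with ⟨a, n, b⟩ | (_ | _) <;> rfl

lemma card_eq [Infinite I] : #(SX A S) = #I := by
  rw [mk_congr eqv]
  simp only [mk_sum, mk_prod, mk_nat, lift_id, mk_bool]
  have h : ℵ₀ ≤ #I := aleph0_le_mk I
  have h3 : (ℵ₀ : Cardinal) * 2 = ℵ₀ := by simp
  rw [h3, mul_aleph0_eq h]
  exact add_eq_left h ((natCast_lt_aleph0 (n := 2)).le.trans h)

def base (J : Finset T) : SX A S → Set (SX A S)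
  | v a _ _ => low a
  | p => bn J
  | q => univ

lemma tweight_le [Infinite I] [Infinite T] (h : #I ≤ #T) : tweight (SX A S) ≤ #T := by
  classical
  let ix := SX A S × Finset T × Finset (SX A S)
  let g : ix → Set (SX A S) := fun k => insert k.1 (base k.2.1 k.1 \ k.2.2)
  refine tweight_le_of_basis (B := g '' {k | (k.2.1 : Set T) ⊆ S})
    (TopologicalSpace.isTopologicalBasis_of_isOpen_of_nhds ?_ ?_) ?_
  · rintro _ ⟨⟨x, J, F⟩, hJ, rfl⟩
    simp only [mem_ofPred_eq] at hJ
    have key : ∀ (x : SX A S) (G : Set (SX A S)), IsOpen (insert x G) →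
        IsOpen (insert x (G \ (F : Set (SX A S)))) := by
      intro x G hG
      have : insert x (G \ (F : Set (SX A S))) = insert x G ∩ ((F : Set (SX A S)) \ {x})ᶜ := by
        ext y
        simp
        tauto
      rw [this]
      exact hG.inter (isOpen_cofinite (by simp))
    apply key
    cases x with
    | v a n b =>
      rintro x (rfl | ⟨c, m, rfl, hc⟩)
      · have : (low a \ insert (v a n b) (low a) : Set (SX A S)) = ∅ :=
          sdiff_eq_empty.2 (subset_insert _ _)
        simp [Nb, base, this]
      · have : (low c \ insert (v a n b) (low a) : Set (SX A S)) = ∅ := by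
          refine sdiff_eq_empty.2 (Subset.trans ?_ (subset_insert _ _))
          rintro _ ⟨c', m', rfl, hc'⟩
          exact ⟨c', m', rfl, hc'.trans hc⟩
        simp [Nb, base, this]
    | p =>
      simp only [base]
      rw [insert_eq_of_mem (p_mem_bn J)]
      exact isOpen_bn hJ
    | q => simp [base]
  · intro x U hx hU
    have := hU x hx
    have fin : ∀ J : Finset T, (J : Set T) ⊆ S → (base J x \ U).Finite →
        ∃ v ∈ g '' {k | (k.2.1 : Set T) ⊆ S}, x ∈ v ∧ v ⊆ U := by
      intro J hJ hf
      refine ⟨_, ⟨⟨x, J, hf.toFinset⟩, hJ, rfl⟩, mem_insert _ _, ?_⟩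
      rintro y (rfl | hy)
      · exact hx
      · simp at hy
        tauto
    cases x with
    | v a n b => exact fin ∅ (by simp) this
    | p =>
      obtain ⟨J, hJ, hf⟩ := this
      exact fin J hJ (hf.subset fun y hy => ⟨hy.1.1, hy.2⟩)
    | q => exact fin ∅ (by simp) (by simpa [base, Nb, compl_eq_univ_sdiff] using this)
  · refine mk_image_le.trans ((mk_set_le _).trans ?_)
    have hi : Infinite (SX A S) := by
      rw [infinite_iff, card_eq]; exact aleph0_le_mk I
    simp only [ix, mk_prod, lift_id, mk_finset_of_infinite, card_eq]
    have hT := aleph0_le_mk T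
    exact mul_le_of_le hT h (mul_le_of_le hT le_rfl h)

end SX

theorem part1 (κ lam : Cardinal) (hκ : ℵ₀ ≤ κ) (h1 : κ ≤ lam) (h2 : lam ≤ 2 ^ κ) :
    ExistsNonHomeoFamily (2 ^ lam) (fun X t =>
      letI := t
      CompactSpace X ∧ T1Space X ∧ #X = κ ∧ tweight X = lam ∧ Scattered X) := by
  let I := κ.ord.ToType
  let T := lam.out
  have hI : #I = κ := mk_ord_toType κ
  have hT : #T = lam := mk_out lam
  have iI : Infinite I := by rw [infinite_iff, hI]; exact hκ
  have iT : Infinite T := by rw [infinite_iff, hT]; exact hκ.trans h1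
  have hTT : #(T ⊕ T) = lam := by
    rw [mk_sum, lift_id, hT, add_eq_self (hκ.trans h1)]
  obtain ⟨A, hA⟩ := exists_indep I (T ⊕ T) (by rw [hTT, hI]; exact h2)
  let S : Set T → Set (T ⊕ T) := fun s => Sum.inl '' s ∪ range Sum.inr
  have iS : ∀ s, Infinite (S s) := fun s =>
    Set.infinite_coe_iff.2 ((infinite_range_of_injective Sum.inr_injective).mono subset_union_right)
  have hS : ∀ s, #(S s) = lam := by
    intro s
    refine le_antisymm ((mk_set_le _).trans hTT.le) ?_
    rw [← hT, ← mk_range_eq (Sum.inr : T → T ⊕ T) Sum.inr_injective]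
    exact mk_le_mk_of_subset subset_union_right
  refine ⟨Set T, fun s => SX A (S s), fun s => inferInstance, by rw [mk_set, hT], ?_, ?_⟩
  · intro s
    refine ⟨inferInstance, inferInstance, ?_, ?_, SX.scattered⟩
    · rw [SX.card_eq, hI]
    · refine le_antisymm ?_ ?_
      · rw [← hTT]
        exact SX.tweight_le (by rw [hI, hTT]; exact h1)
      · rw [← hS s]
        exact SX.le_tweight hA
  · intro s s' hne
    refine ⟨fun h => hne ?_⟩
    have e : S s = S s' := (SX.homeo_subset hA h).antisymm (SX.homeo_subset hA h.symm)
    ext x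
    have := Set.ext_iff.1 e (Sum.inl x)
    simpa [S] using this

/-! ### Hyperconnected extension -/

inductive HX (X : Type) : Type
  | i (x : X)
  | d (n : ℕ) (b : Bool)

namespace HX

variable {X : Type} [TopologicalSpace X]

instance : TopologicalSpace (HX X) where
  IsOpen U := IsOpen (i ⁻¹' U) ∧ ((∃ x, i x ∈ U) → {k : ℕ × Bool | d k.1 k.2 ∉ U}.Finite) ∧
    (U.Nonempty → {n : ℕ | d n false ∉ U}.Finite)
  isOpen_univ := by simp
  isOpen_inter := by
    rintro U V ⟨h1, h2, h3⟩ ⟨h1', h2', h3'⟩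
    refine ⟨h1.inter h1', ?_, ?_⟩
    · rintro ⟨x, hx⟩
      refine ((h2 ⟨x, hx.1⟩).union (h2' ⟨x, hx.2⟩)).subset ?_
      intro k hk
      by_contra hcon
      simp only [mem_union, mem_ofPred_eq, not_or, not_not] at hcon
      exact hk hcon
    · rintro ⟨x, hx⟩
      refine ((h3 ⟨x, hx.1⟩).union (h3' ⟨x, hx.2⟩)).subset ?_
      intro k hk
      by_contra hcon
      simp only [mem_union, mem_ofPred_eq, not_or, not_not] at hcon
      exact hk hcon
  isOpen_sUnion := by
    intro s hs
    refine ⟨?_, ?_, ?_⟩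
    · rw [preimage_sUnion]
      exact isOpen_biUnion fun U hU => (hs U hU).1
    · rintro ⟨x, U, hU, hx⟩
      exact ((hs U hU).2.1 ⟨x, hx⟩).subset fun k hk hh => hk ⟨U, hU, hh⟩
    · rintro ⟨x, U, hU, hx⟩
      exact ((hs U hU).2.2 ⟨x, hx⟩).subset fun k hk hh => hk ⟨U, hU, hh⟩

lemma isOpen_def {U : Set (HX X)} : IsOpen U ↔
    IsOpen (i ⁻¹' U) ∧ ((∃ x, i x ∈ U) → {k : ℕ × Bool | d k.1 k.2 ∉ U}.Finite) ∧
    (U.Nonempty → {n : ℕ | d n false ∉ U}.Finite) := Iff.rfl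

/-- basic open sets of first kind -/
def b1 (V : Set X) (F : Finset (ℕ × Bool)) : Set (HX X) :=
  {z | (∃ x ∈ V, z = i x) ∨ ∃ n b, z = d n b ∧ (n, b) ∉ F}

set_option linter.unusedSectionVars false in
lemma mem_b1_d {V : Set X} {F : Finset (ℕ × Bool)} {n : ℕ} {b : Bool} :
    d n b ∈ b1 V F ↔ (n, b) ∉ F := by
  constructor
  · rintro (⟨x, -, h⟩ | ⟨n', b', h, h'⟩)
    · simp at h
    · simp only [d.injEq] at h
      rwa [h.1, h.2]
  · intro h
    exact Or.inr ⟨n, b, rfl, h⟩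

set_option linter.unusedSectionVars false in
lemma mem_b1_i {V : Set X} {F : Finset (ℕ × Bool)} {x : X} :
    i x ∈ b1 V F ↔ x ∈ V := by simp [b1]

/-- basic open sets of second kind -/
def b2 (k : ℕ × Bool) (F : Finset ℕ) : Set (HX X) :=
  {z | z = d k.1 k.2 ∨ ∃ n, z = d n false ∧ n ∉ F}

lemma isOpen_b1 {V : Set X} (hV : IsOpen V) (F : Finset (ℕ × Bool)) : IsOpen (b1 V F) := by
  refine ⟨?_, fun _ => ?_, fun _ => ?_⟩
  · convert hV using 1
    ext x
    simp [b1]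
  · refine F.finite_toSet.subset ?_
    rintro ⟨n, b⟩ h
    simpa [mem_b1_d] using h
  · refine ((F.image Prod.fst).finite_toSet).subset ?_
    intro n h
    simp [b1] at h
    simpa using Or.inl h

lemma isOpen_b2 (k : ℕ × Bool) (F : Finset ℕ) : IsOpen (b2 k F : Set (HX X)) := by
  refine ⟨?_, ?_, fun _ => ?_⟩
  · convert isOpen_empty using 1
    ext x
    simp [b2]
  · rintro ⟨x, hx⟩
    simp [b2] at hx
  · refine F.finite_toSet.subset ?_
    intro n h
    simp [b2] at h
    exact h.2

lemma continuous_i : Continuous (i : X → HX X) := ⟨fun _ hU => hU.1⟩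

lemma isEmbedding_i : IsEmbedding (i : X → HX X) := by
  refine ⟨⟨le_antisymm continuous_i.le_induced ?_⟩, fun x y h => by simpa using h⟩
  intro V hV
  refine ⟨b1 V ∅, isOpen_b1 hV _, ?_⟩
  ext x
  simp [b1]

instance [CompactSpace X] [Nonempty X] : CompactSpace (HX X) := by
  refine compact_of_core (range i) (isCompact_range continuous_i) fun U hU hK => ?_
  have := hU.2.1 ⟨Classical.arbitrary X, hK ⟨_, rfl⟩⟩
  refine Set.Finite.isCompact ((this.image fun k => d k.1 k.2).subset ?_)
  intro z hz
  cases z with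
  | i x => exact absurd (hK ⟨x, rfl⟩) hz
  | d n b => exact ⟨(n, b), hz, rfl⟩

instance [T1Space X] : T1Space (HX X) := by
  refine ⟨fun z => ⟨?_⟩⟩
  cases z with
  | i x =>
    convert isOpen_b1 (isOpen_compl_singleton (x := x)) ∅ using 1
    ext z
    cases z <;> simp [mem_b1_i, mem_b1_d]
  | d n b =>
    convert isOpen_b1 (isOpen_univ (X := X)) {(n, b)} using 1
    ext z
    cases z <;> simp [mem_b1_i, mem_b1_d]

lemma preirr : IsPreirreducible (univ : Set (HX X)) := by
  rintro U V hU hV ⟨x, -, hx⟩ ⟨y, -, hy⟩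
  have h := (hU.2.2 ⟨x, hx⟩).union (hV.2.2 ⟨y, hy⟩)
  obtain ⟨n, hn⟩ := h.exists_notMem
  simp only [mem_union, mem_ofPred_eq, not_or, not_not] at hn
  exact ⟨d n false, trivial, hn⟩

instance : ConnectedSpace (HX X) := by
  have : PreconnectedSpace (HX X) := ⟨preirr.isPreconnected⟩
  exact { toNonempty := ⟨d 0 false⟩ }

instance : LocallyConnectedSpace (HX X) := by
  refine locallyConnectedSpace_of_connected_bases (fun _ U => U) (fun x U => x ∈ U ∧ IsOpen U)
    nhds_basis_opens fun x U hU => ?_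
  exact (preirr.open_subset hU.2 (subset_univ _)).isPreconnected

def Low (z : HX X) : Prop :=
  ∃ W, IsOpen W ∧ z ∈ W ∧ ∀ V : Set (HX X), IsOpen V → V.Nonempty → (W \ V).Finite

lemma low_iff (z : HX X) : z ∈ range i ↔ ¬ Low z := by
  constructor
  · rintro ⟨x, rfl⟩ ⟨W, hW, hx, h⟩
    have h1 := h (b2 (0, false) ∅) (isOpen_b2 _ _) ⟨d 0 false, Or.inl rfl⟩
    have h2 := hW.2.1 ⟨x, hx⟩
    have h3 : (range fun n : ℕ => (d n true : HX X)).Infinite :=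
      infinite_range_of_injective fun m n h => by simpa using h
    refine h3 ((h1.union (h2.image fun k => d k.1 k.2)).subset ?_)
    rintro _ ⟨n, rfl⟩
    by_cases hn : d n true ∈ W
    · exact Or.inl ⟨hn, by simp [b2]⟩
    · exact Or.inr ⟨(n, true), hn, rfl⟩
  · intro h
    cases z with
    | i x => exact ⟨x, rfl⟩
    | d n b =>
      refine absurd ⟨b2 (n, b) ∅, isOpen_b2 _ _, Or.inl rfl, fun V hV hne => ?_⟩ h
      refine (((hV.2.2 hne).image fun m => d m false).union (finite_singleton (d n b))).subset ?_
      rintro z ⟨rfl | ⟨m, rfl, -⟩, h2⟩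
      · exact Or.inr rfl
      · exact Or.inl ⟨m, h2, rfl⟩

lemma low_homeo {Y : Type} [TopologicalSpace Y] (h : HX X ≃ₜ HX Y) {z : HX X} (hz : Low z) :
    Low (h z) := by
  obtain ⟨W, hW, hzW, hh⟩ := hz
  refine ⟨h.symm ⁻¹' W, hW.preimage h.symm.continuous, by simpa using hzW, fun V hV hne => ?_⟩
  have h1 := hh (h ⁻¹' V) (hV.preimage h.continuous) (by
    obtain ⟨y, hy⟩ := hne
    exact ⟨h.symm y, by simpa using hy⟩)
  refine (h1.image h).subset ?_
  rintro y ⟨h1, h2⟩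
  exact ⟨h.symm y, ⟨h1, by simpa using h2⟩, by simp⟩

lemma homeo {Y : Type} [TopologicalSpace Y] (h : HX X ≃ₜ HX Y) : Nonempty (X ≃ₜ Y) := by
  refine homeo_restrict isEmbedding_i isEmbedding_i h fun z => ?_
  rw [low_iff, low_iff, not_iff_not]
  refine ⟨low_homeo h, fun hz => ?_⟩
  simpa using low_homeo h.symm hz

def eqv : HX X ≃ X ⊕ (ℕ × Bool) where
  toFun
    | i x => Sum.inl x
    | d n b => Sum.inr (n, b)
  invFun
    | Sum.inl x => i x
    | Sum.inr (n, b) => d n b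
  left_inv x := by cases x <;> rfl
  right_inv x := by rcases x with x | ⟨n, b⟩ <;> rfl

set_option linter.unusedSectionVars false in
lemma card_eq [Infinite X] : #(HX X) = #X := by
  rw [mk_congr eqv]
  simp only [mk_sum, mk_prod, mk_nat, lift_id, mk_bool]
  have h : ℵ₀ ≤ #X := aleph0_le_mk X
  have h3 : (ℵ₀ : Cardinal) * 2 = ℵ₀ := by simp
  rw [h3]
  exact add_eq_left h h

lemma tweight_le {c : Cardinal} (hc : ℵ₀ ≤ c) (h : tweight X ≤ c) : tweight (HX X) ≤ c := by
  obtain ⟨B, hB, hB'⟩ := exists_basis_tweight X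
  rw [← hB'] at h
  let g1 : B × Finset (ℕ × Bool) → Set (HX X) := fun k => b1 k.1 k.2
  let g2 : (ℕ × Bool) × Finset ℕ → Set (HX X) := fun k => b2 k.1 k.2
  refine tweight_le_of_basis (B := range g1 ∪ range g2)
    (TopologicalSpace.isTopologicalBasis_of_isOpen_of_nhds ?_ ?_) ?_
  · rintro _ (⟨k, rfl⟩ | ⟨k, rfl⟩)
    · exact isOpen_b1 (hB.isOpen k.1.2) _
    · exact isOpen_b2 _ _
  · intro z U hz hU
    cases z with
    | i x =>
      obtain ⟨V, hV, hxV, hVU⟩ := hB.exists_subset_of_mem_open (show x ∈ i ⁻¹' U from hz) hU.1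
      refine ⟨_, Or.inl ⟨(⟨V, hV⟩, (hU.2.1 ⟨x, hz⟩).toFinset), rfl⟩, Or.inl ⟨x, hxV, rfl⟩, ?_⟩
      rintro z (⟨y, hy, rfl⟩ | ⟨n, b, rfl, h⟩)
      · exact hVU hy
      · simpa using h
    | d n b =>
      refine ⟨_, Or.inr ⟨((n, b), (hU.2.2 ⟨_, hz⟩).toFinset), rfl⟩, Or.inl rfl, ?_⟩
      rintro z (rfl | ⟨n, rfl, h⟩)
      · exact hz
      · simpa using h
  · refine (mk_union_le _ _).trans (add_le_of_le hc (mk_range_le.trans ?_) (mk_range_le.trans ?_))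
    · rw [mk_prod, lift_id, lift_id]
      exact mul_le_of_le hc h (mk_le_aleph0.trans hc)
    · exact mk_le_aleph0.trans hc

end HX

/-! ### Graph extension -/

abbrev GEdge (X : Type) : Type := {p : X × X // p.1 ≠ p.2} × ℕ

abbrev GInt : Type := {t : unitInterval // t ≠ 0 ∧ t ≠ 1}

inductive GX (X : Type) : Type
  | i (x : X)
  | m (e : GEdge X) (t : GInt)

namespace GX

set_option linter.unusedSectionVars false

variable {X : Type} [TopologicalSpace X]

def src (e : GEdge X) : X := e.1.1.1
def tgt (e : GEdge X) : X := e.1.1.2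

lemma src_ne_tgt (e : GEdge X) : src e ≠ tgt e := e.1.2

open Classical in
noncomputable def φ (e : GEdge X) (t : unitInterval) : GX X :=
  if h0 : t = 0 then i (src e) else if h1 : t = 1 then i (tgt e) else m e ⟨t, h0, h1⟩

lemma φ_zero (e : GEdge X) : φ e 0 = i (src e) := by simp [φ]
lemma φ_one (e : GEdge X) : φ e 1 = i (tgt e) := by simp [φ]
lemma φ_int (e : GEdge X) (t : GInt) : φ e t.1 = m e t := by simp [φ, t.2.1, t.2.2]

lemma φ_cases (e : GEdge X) (t : unitInterval) :
    t = 0 ∧ φ e t = i (src e) ∨ t = 1 ∧ φ e t = i (tgt e) ∨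
      ∃ s : GInt, s.1 = t ∧ φ e t = m e s := by
  by_cases h0 : t = 0
  · subst h0; exact Or.inl ⟨rfl, φ_zero e⟩
  by_cases h1 : t = 1
  · subst h1; exact Or.inr (Or.inl ⟨rfl, φ_one e⟩)
  · exact Or.inr (Or.inr ⟨⟨t, h0, h1⟩, rfl, φ_int e ⟨t, h0, h1⟩⟩)

lemma φ_eq_m {e e' : GEdge X} {t : unitInterval} {s : GInt} (h : φ e t = m e' s) :
    e = e' ∧ t = s.1 := by
  rcases φ_cases e t with ⟨-, h'⟩ | ⟨-, h'⟩ | ⟨r, rfl, h'⟩ <;> rw [h'] at h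
  · cases h
  · cases h
  · simp only [m.injEq] at h
    exact ⟨h.1, by rw [h.2]⟩

lemma φ_inj (e : GEdge X) : Function.Injective (φ e) := by
  intro s t h
  rcases φ_cases e s with ⟨hs, h'⟩ | ⟨hs, h'⟩ | ⟨r, hs, h'⟩ <;>
  rcases φ_cases e t with ⟨ht, h''⟩ | ⟨ht, h''⟩ | ⟨r', ht, h''⟩ <;>
  rw [h', h''] at h
  · rw [hs, ht]
  · exact absurd (by simpa using h) (src_ne_tgt e)
  · cases h
  · exact absurd (by simpa using h) (src_ne_tgt e).symm
  · rw [hs, ht]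
  · cases h
  · cases h
  · cases h
  · simp only [m.injEq, true_and] at h
    rw [← hs, ← ht, h]

instance : TopologicalSpace (GX X) where
  IsOpen U := (∀ e, IsOpen (φ e ⁻¹' U)) ∧ ∀ x, i x ∈ U → ∃ V, IsOpen V ∧ x ∈ V ∧
    (∀ y ∈ V, i y ∈ U) ∧ {e | (src e ∈ V ∨ tgt e ∈ V) ∧ ∃ t, m e t ∉ U}.Finite
  isOpen_univ := ⟨by simp, fun x _ => ⟨univ, by simp⟩⟩
  isOpen_inter := by
    rintro U U' ⟨h1, h2⟩ ⟨h1', h2'⟩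
    refine ⟨fun e => (h1 e).inter (h1' e), fun x hx => ?_⟩
    obtain ⟨V, hV, hxV, h3, h4⟩ := h2 x hx.1
    obtain ⟨V', hV', hxV', h3', h4'⟩ := h2' x hx.2
    refine ⟨V ∩ V', hV.inter hV', ⟨hxV, hxV'⟩, fun y hy => ⟨h3 y hy.1, h3' y hy.2⟩,
      (h4.union h4').subset ?_⟩
    rintro e ⟨he, t, ht⟩
    by_cases htU : m e t ∈ U
    · exact Or.inr ⟨he.imp And.right And.right, t, fun hh => ht ⟨htU, hh⟩⟩
    · exact Or.inl ⟨he.imp And.left And.left, t, htU⟩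
  isOpen_sUnion := by
    intro s hs
    refine ⟨fun e => ?_, ?_⟩
    · rw [preimage_sUnion]
      exact isOpen_biUnion fun U hU => (hs U hU).1 e
    · rintro x ⟨U, hU, hx⟩
      obtain ⟨V, hV, hxV, h3, h4⟩ := (hs U hU).2 x hx
      refine ⟨V, hV, hxV, fun y hy => ⟨U, hU, h3 y hy⟩, h4.subset ?_⟩
      rintro e ⟨he, t, ht⟩
      exact ⟨he, t, fun hh => ht ⟨U, hU, hh⟩⟩

def mkU (V : Set X) (O : GEdge X → Set unitInterval) : Set (GX X) :=
  {z | (∃ x ∈ V, z = i x) ∨ ∃ e t, z = m e t ∧ t.1 ∈ O e}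

lemma i_mem_mkU {V : Set X} {O : GEdge X → Set unitInterval} {x : X} :
    i x ∈ mkU V O ↔ x ∈ V := by simp [mkU]

lemma m_mem_mkU {V : Set X} {O : GEdge X → Set unitInterval} {e : GEdge X} {t : GInt} :
    m e t ∈ mkU V O ↔ t.1 ∈ O e := by
  constructor
  · rintro (⟨x, -, h⟩ | ⟨e', t', h, h'⟩)
    · cases h
    · simp only [m.injEq] at h
      rwa [h.1, h.2]
  · intro h
    exact Or.inr ⟨e, t, rfl, h⟩

lemma isOpen_mkU {V : Set X} (hV : IsOpen V) {O : GEdge X → Set unitInterval}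
    (hO : ∀ e, IsOpen (O e)) (h0 : ∀ e, src e ∈ V → 0 ∈ O e) (h1 : ∀ e, tgt e ∈ V → 1 ∈ O e)
    (hf : {e | (src e ∈ V ∨ tgt e ∈ V) ∧ ∃ t : GInt, t.1 ∉ O e}.Finite) :
    IsOpen (mkU V O) := by
  refine ⟨fun e => ?_, fun x hx => ⟨V, hV, i_mem_mkU.1 hx, fun y hy => i_mem_mkU.2 hy, ?_⟩⟩
  · have : φ e ⁻¹' mkU V O = O e ∩ ({t | t ∈ ({0} : Set unitInterval) ∧ src e ∉ V}ᶜ ∩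
        {t | t ∈ ({1} : Set unitInterval) ∧ tgt e ∉ V}ᶜ) := by
      ext t
      rw [mem_preimage]
      rcases φ_cases e t with ⟨ht, h'⟩ | ⟨ht, h'⟩ | ⟨r, ht, h'⟩
      · rw [h', i_mem_mkU, ht]
        have := h0 e
        simp
        tauto
      · rw [h', i_mem_mkU, ht]
        have := h1 e
        simp
        tauto
      · rw [h', m_mem_mkU, ← ht]
        have := r.2
        simp
        tauto
    rw [this]
    refine (hO e).inter (IsOpen.inter ?_ ?_)
    · exact ((finite_singleton _).subset fun t ht => ht.1).isClosed.isOpen_compl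
    · exact ((finite_singleton _).subset fun t ht => ht.1).isClosed.isOpen_compl
  · simpa only [m_mem_mkU] using hf

lemma continuous_φ (e : GEdge X) : Continuous (φ e) := ⟨fun _ hU => hU.1 e⟩

lemma continuous_i : Continuous (i : X → GX X) := by
  refine ⟨fun U hU => ?_⟩
  rw [isOpen_iff_forall_mem_open]
  intro x hx
  obtain ⟨V, hV, hxV, h3, -⟩ := hU.2 x hx
  exact ⟨V, h3, hV, hxV⟩

lemma isEmbedding_i : IsEmbedding (i : X → GX X) := by
  refine ⟨⟨le_antisymm continuous_i.le_induced ?_⟩, fun x y h => by simpa using h⟩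
  intro V hV
  refine ⟨mkU V fun _ => univ, isOpen_mkU hV (by simp) (by simp) (by simp) (by simp), ?_⟩
  ext x
  rw [mem_preimage, i_mem_mkU]

instance [CompactSpace X] : CompactSpace (GX X) := by
  refine compact_of_core (range i) (isCompact_range continuous_i) fun U hU hK => ?_
  have h := fun x => hU.2 x (hK ⟨x, rfl⟩)
  choose V hV hxV h3 h4 using h
  obtain ⟨s, hs⟩ := isCompact_univ.elim_finite_subcover V hV fun x _ => mem_iUnion.2 ⟨x, hxV x⟩
  have hfin : (⋃ x ∈ s, {e | (src e ∈ V x ∨ tgt e ∈ V x) ∧ ∃ t, m e t ∉ U}).Finite :=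
    s.finite_toSet.biUnion fun x _ => h4 x
  refine (hfin.isCompact_biUnion fun e _ => isCompact_range (continuous_φ e)).of_isClosed_subset
    hU.isClosed_compl ?_
  intro z hz
  cases z with
  | i x => exact absurd (hK ⟨x, rfl⟩) hz
  | m e t =>
    obtain ⟨x, hx, hxe⟩ := mem_iUnion₂.1 (hs (mem_univ (src e)))
    refine mem_iUnion₂.2 ⟨e, mem_iUnion₂.2 ⟨x, hx, Or.inl hxe, t, hz⟩, t.1, φ_int e t⟩

lemma continuous_bump (e : GEdge X) (g : unitInterval → ℝ) (hg : Continuous g) (h0 : g 0 = 0)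
    (h1 : g 1 = 0) : ∃ χ : GX X → ℝ, Continuous χ ∧ (∀ x, χ (i x) = 0) ∧
      (∀ t : GInt, χ (m e t) = g t.1) ∧ ∀ e' t, e' ≠ e → χ (m e' t) = 0 := by
  classical
  let χ : GX X → ℝ
    | i x => 0
    | m e' t => if e' = e then g t.1 else 0
  have hφ : ∀ e' t, χ (φ e' t) = if e' = e then g t else 0 := by
    intro e' t
    rcases φ_cases e' t with ⟨ht, h'⟩ | ⟨ht, h'⟩ | ⟨r, ht, h'⟩ <;> rw [h'] <;> simp [χ, ht, h0, h1]
  refine ⟨χ, ⟨fun U hU => ⟨fun e' => ?_, fun x hx => ⟨univ, isOpen_univ, trivial, fun y _ => hx, ?_⟩⟩⟩,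
    fun x => rfl, fun t => by simp [χ], fun e' t h => by simp [χ, h]⟩
  · have : (χ ∘ φ e') = if e' = e then g else fun _ => 0 := by
      ext t
      simp only [Function.comp, hφ]
      split_ifs <;> rfl
    rw [← preimage_comp, this]
    split_ifs
    · exact hU.preimage hg
    · exact hU.preimage continuous_const
  · refine (finite_singleton e).subset ?_
    rintro e' ⟨-, t, ht⟩
    by_contra hne
    apply ht
    simp only [mem_preimage, χ]
    rw [if_neg (by simpa using hne)]
    exact hx

lemma exists_bump (e : GEdge X) (t : GInt) : ∃ χ : GX X → ℝ, Continuous χ ∧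
    ∀ z, χ z = χ (m e t) → z = m e t := by
  have ht0 : (0 : ℝ) < t.1 := unitInterval.pos_iff_ne_zero.2 t.2.1
  have ht1 : (t.1 : ℝ) < 1 := unitInterval.lt_one_iff_ne_one.2 t.2.2
  let r : ℝ := min (t.1 : ℝ) (1 - t.1)
  have hr : 0 < r := lt_min ht0 (by linarith)
  have hr1 : r ≤ t.1 := min_le_left _ _
  have hr2 : r ≤ 1 - t.1 := min_le_right _ _
  obtain ⟨χ, hχ, h1, h2, h3⟩ := continuous_bump e (fun s => max 0 (r - |(s : ℝ) - t.1|))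
    (by fun_prop) (by
      have : |((0 : unitInterval) : ℝ) - t.1| = t.1 := by
        rw [abs_sub_comm]; simp [abs_of_pos ht0]
      rw [this]; exact max_eq_left (by linarith)) (by
      have : |((1 : unitInterval) : ℝ) - t.1| = 1 - t.1 := by
        rw [abs_of_nonneg] <;> simp <;> linarith
      rw [this]; exact max_eq_left (by linarith))
  have h4 : χ (m e t) = r := by
    rw [h2]; simp [hr.le]
  refine ⟨χ, hχ, fun z hz => ?_⟩
  rw [h4] at hz
  cases z with
  | i x => rw [h1] at hz; exact absurd hz hr.ne
  | m e' s =>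
    by_cases he : e' = e
    · subst he
      rw [h2] at hz
      have : |(s.1 : ℝ) - t.1| ≤ 0 := by
        rcases max_cases 0 (r - |(s.1 : ℝ) - t.1|) with h | h <;> linarith
      have : (s.1 : ℝ) = t.1 := by
        have := abs_nonpos_iff.1 this
        linarith
      have : s = t := Subtype.ext (Subtype.ext this)
      rw [this]
    · rw [h3 _ _ he] at hz; exact absurd hz hr.ne

lemma isGdelta_m (e : GEdge X) (t : GInt) : IsGδ ({m e t} : Set (GX X)) := by
  obtain ⟨χ, hχ, h⟩ := exists_bump e t
  have : ({m e t} : Set (GX X)) = χ ⁻¹' {χ (m e t)} := by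
    ext z
    constructor
    · rintro rfl
      simp
    · exact fun hz => h z hz
  rw [this]
  exact (IsGδ.singleton _).preimage hχ

instance [T1Space X] : T1Space (GX X) := by
  refine ⟨fun z => ?_⟩
  cases z with
  | i x =>
    refine ⟨?_⟩
    have := isOpen_mkU (isOpen_compl_singleton (x := x)) (O := fun _ => univ) (by simp) (by simp)
      (by simp) (by simp)
    convert this using 1
    ext z
    cases z with
    | i y => rw [i_mem_mkU]; simp
    | m e t => rw [m_mem_mkU]; simp
  | m e t =>
    obtain ⟨χ, hχ, h⟩ := exists_bump e t
    have : ({m e t} : Set (GX X)) = χ ⁻¹' {χ (m e t)} := by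
      ext z
      constructor
      · rintro rfl
        simp
      · exact fun hz => h z hz
    rw [this]
    exact isClosed_singleton.preimage hχ

lemma not_isGdelta_i [Uncountable X] (x : X) : ¬ IsGδ ({i x} : Set (GX X)) := by
  rw [isGδ_iff_eq_iInter_nat]
  rintro ⟨f, hf, hx⟩
  have hxf : ∀ n, i x ∈ f n := fun n => mem_iInter.1 (hx ▸ rfl : i x ∈ ⋂ n, f n) n
  have h : ∀ n, {e | src e = x ∧ ∃ t, m e t ∉ f n}.Finite := by
    intro n
    obtain ⟨V, hV, hxV, h3, h4⟩ := (hf n).2 x (hxf n)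
    refine h4.subset ?_
    rintro e ⟨rfl, t, ht⟩
    exact ⟨Or.inl hxV, t, ht⟩
  have hc : (⋃ n, {e | src e = x ∧ ∃ t, m e t ∉ f n}).Countable :=
    countable_iUnion fun n => (h n).countable
  have hc2 : (insert x (tgt '' (⋃ n, {e | src e = x ∧ ∃ t, m e t ∉ f n}))).Countable :=
    (hc.image _).insert _
  obtain ⟨y, hy⟩ : ∃ y, y ∉ (insert x (tgt '' (⋃ n, {e | src e = x ∧ ∃ t, m e t ∉ f n}))) := by
    by_contra hcon
    push Not at hcon
    rw [eq_univ_of_forall hcon] at hc2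
    exact not_countable (α := X) (countable_univ_iff.1 hc2)
  have hxy : x ≠ y := fun h => hy (h ▸ mem_insert _ _)
  let e : GEdge X := (⟨(x, y), hxy⟩, 0)
  let t : GInt := ⟨⟨1 / 2, by norm_num, by norm_num⟩, by
    simp [Subtype.ext_iff], by simp [Subtype.ext_iff]⟩
  have : m e t ∈ ({i x} : Set (GX X)) := by
    rw [hx]
    refine mem_iInter.2 fun n => ?_
    by_contra hn
    exact hy (Or.inr ⟨e, mem_iUnion.2 ⟨n, rfl, t, hn⟩, rfl⟩)
  cases this

lemma homeo {Y : Type} [TopologicalSpace Y] [Uncountable X] [Uncountable Y]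
    (h : GX X ≃ₜ GX Y) : Nonempty (X ≃ₜ Y) := by
  have key : ∀ {X : Type} [TopologicalSpace X] [Uncountable X] (z : GX X),
      z ∈ range i ↔ ¬ IsGδ {z} := by
    intro X _ _ z
    cases z with
    | i x => simpa using not_isGdelta_i x
    | m e t => simpa using isGdelta_m e t
  refine homeo_restrict isEmbedding_i isEmbedding_i h fun z => ?_
  rw [key, key, not_iff_not]
  constructor
  · intro hz
    have := hz.preimage h.symm.continuous
    convert this using 1
    ext w
    simp [Homeomorph.symm_apply_eq]
  · intro hz
    have := hz.preimage h.continuous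
    convert this using 1
    ext w
    simp

lemma card_eq (h : Cardinal.continuum ≤ #X) : #(GX X) = #X := by
  have h0 : ℵ₀ ≤ #X := aleph0_le_continuum.trans h
  refine le_antisymm ?_ (mk_le_of_injective (isEmbedding_i (X := X)).injective)
  let f : X ⊕ (GEdge X × GInt) → GX X := Sum.elim i fun k => m k.1 k.2
  have hf : Function.Surjective f := by
    intro z
    cases z with
    | i x => exact ⟨Sum.inl x, rfl⟩
    | m e t => exact ⟨Sum.inr (e, t), rfl⟩
  refine (mk_le_of_surjective hf).trans ?_
  have h1 : #GInt ≤ #X := by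
    refine (mk_subtype_le _).trans (le_trans ?_ h)
    rw [← mk_real]
    exact mk_subtype_le _
  have h2 : #(GEdge X) ≤ #X := by
    rw [mk_prod, lift_id, lift_id]
    refine mul_le_of_le h0 ((mk_subtype_le _).trans ?_) (mk_le_aleph0.trans h0)
    rw [mk_prod, lift_id, mul_eq_self h0]
  rw [mk_sum, mk_prod, lift_id, lift_id, lift_id, lift_id]
  exact add_le_of_le h0 le_rfl (mul_le_of_le h0 h2 h1)

end GX

namespace GX

set_option linter.unusedSectionVars false

variable {X : Type} [TopologicalSpace X]

/-! arcs -/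

def FT (N : Set (GX X)) : Prop := {x | i x ∈ N}.Finite ∧ {e | ∃ t, m e t ∈ N}.Finite

lemma FT.union {M N : Set (GX X)} (h : FT M) (h' : FT N) : FT (M ∪ N) := by
  refine ⟨(h.1.union h'.1).subset fun x hx => hx, (h.2.union h'.2).subset ?_⟩
  rintro e ⟨t, ht | ht⟩
  · exact Or.inl ⟨t, ht⟩
  · exact Or.inr ⟨t, ht⟩

lemma FT.mono {M N : Set (GX X)} (h : FT N) (hMN : M ⊆ N) : FT M :=
  ⟨h.1.subset fun _ hx => hMN hx, h.2.subset fun _ ⟨t, ht⟩ => ⟨t, hMN ht⟩⟩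

lemma FT_range (e : GEdge X) : FT (range (φ e)) := by
  refine ⟨((finite_singleton (src e)).union (finite_singleton (tgt e))).subset ?_,
    (finite_singleton e).subset ?_⟩
  · rintro x ⟨t, ht⟩
    rcases φ_cases e t with ⟨-, h'⟩ | ⟨-, h'⟩ | ⟨r, -, h'⟩ <;> rw [h'] at ht
    · simp at ht; simp [ht]
    · simp at ht; simp [ht]
    · cases ht
  · rintro e' ⟨t, s, hs⟩
    exact (φ_eq_m hs).1.symm

lemma t2_of_FT [T1Space X] {N : Set (GX X)} (hN : FT N) : T2Space N := by
  classical
  let F := {e | ∃ t, m e t ∈ N}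
  let B := {x | i x ∈ N} ∪ (src '' F ∪ tgt '' F)
  have hB : B.Finite := hN.1.union ((hN.2.image _).union (hN.2.image _))
  let Ox : X → Set (GX X) := fun x => mkU ((B \ {x})ᶜ) (fun e => if e ∈ F then
    {t | (src e = x ∧ (t : ℝ) < 1 / 2) ∨ (tgt e = x ∧ (1 / 2 : ℝ) < t)} else univ)
  have hO : ∀ x, IsOpen (Ox x) := by
    intro x
    refine isOpen_mkU (hB.sdiff).isClosed.isOpen_compl ?_ ?_ ?_ (hN.2.subset ?_)
    · intro e
      split_ifs
      · exact IsOpen.union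
          (isOpen_const.and (isOpen_lt continuous_subtype_val continuous_const))
          (isOpen_const.and (isOpen_lt continuous_const continuous_subtype_val))
      · exact isOpen_univ
    · intro e he
      split_ifs with h
      · refine Or.inl ⟨?_, by simp⟩
        by_contra hne
        exact he ⟨Or.inr (Or.inl ⟨e, h, rfl⟩), hne⟩
      · trivial
    · intro e he
      split_ifs with h
      · refine Or.inr ⟨?_, by norm_num⟩
        by_contra hne
        exact he ⟨Or.inr (Or.inr ⟨e, h, rfl⟩), hne⟩
      · trivial
    · rintro e ⟨-, t, ht⟩
      by_contra hF
      rw [if_neg hF] at ht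
      exact ht trivial
  have key : ∀ (e : GEdge X) (t : GInt) (u w : N), u.1 = m e t → u ≠ w →
      ∃ a b : Set N, IsOpen a ∧ IsOpen b ∧ u ∈ a ∧ w ∈ b ∧ Disjoint a b := by
    intro e t u w hu hne
    obtain ⟨χ, hχ, h⟩ := exists_bump e t
    refine separated_by_continuous (hχ.comp continuous_subtype_val) ?_
    intro hh
    simp only [Function.comp] at hh
    rw [hu] at hh
    exact hne (Subtype.ext (hu.trans (h _ hh.symm).symm))
  refine ⟨fun u w hne => ?_⟩
  rcases hu : u.1 with x | ⟨e, t⟩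
  · rcases hw : w.1 with y | ⟨e, t⟩
    · have hxy : x ≠ y := by
        rintro rfl
        exact hne (Subtype.ext (hu.trans hw.symm))
      refine ⟨Subtype.val ⁻¹' Ox x, Subtype.val ⁻¹' Ox y, (hO x).preimage continuous_subtype_val,
        (hO y).preimage continuous_subtype_val, ?_, ?_, ?_⟩
      · rw [mem_preimage, hu, i_mem_mkU]; simp
      · rw [mem_preimage, hw, i_mem_mkU]; simp
      · rw [Set.disjoint_left]
        rintro ⟨z, hz⟩ h1 h2
        simp only [mem_preimage, Ox] at h1 h2
        cases z with
        | i v =>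
          rw [i_mem_mkU] at h1 h2
          have hv : v ∈ B := Or.inl hz
          have e1 : v = x := by by_contra h; exact h1 ⟨hv, h⟩
          have e2 : v = y := by by_contra h; exact h2 ⟨hv, h⟩
          exact hxy (e1.symm.trans e2)
        | m e t =>
          have he : e ∈ F := ⟨t, hz⟩
          rw [m_mem_mkU, if_pos he] at h1 h2
          rcases h1 with ⟨a1, a2⟩ | ⟨a1, a2⟩ <;> rcases h2 with ⟨b1, b2⟩ | ⟨b1, b2⟩
          · exact hxy (a1.symm.trans b1)
          · linarith
          · linarith
          · exact hxy (a1.symm.trans b1)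
    · obtain ⟨a, b, h1, h2, h3, h4, h5⟩ := key e t w u hw hne.symm
      exact ⟨b, a, h2, h1, h4, h3, h5.symm⟩
  · exact key e t u w hu hne

def JArc {Z : Type} [TopologicalSpace Z] (a b : Z) (N : Set Z) : Prop :=
  ∃ γ : Path a b, Function.Injective γ ∧ range γ ⊆ N

def JC {Z : Type} [TopologicalSpace Z] (a b : Z) (N : Set Z) : Prop :=
  a = b ∨ JArc a b N

lemma JArc.embedding [T1Space X] {a b : GX X} {N : Set (GX X)} (h : JArc a b N) (hN : FT N) :
    ∃ f : unitInterval → GX X, IsEmbedding f ∧ range f ⊆ N ∧ f 0 = a ∧ f 1 = b := by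
  obtain ⟨γ, hγ, hr⟩ := h
  have := t2_of_FT hN
  let g : unitInterval → N := fun t => ⟨γ t, hr ⟨t, rfl⟩⟩
  have hg : Continuous g := by fun_prop
  have hgi : Function.Injective g := fun s t h => hγ (congrArg Subtype.val h)
  exact ⟨γ, IsEmbedding.subtypeVal.comp (hg.isClosedEmbedding hgi).isEmbedding, hr,
    γ.source, γ.target⟩

lemma JArc.mono {Z : Type} [TopologicalSpace Z] {a b : Z} {M N : Set Z} (h : JArc a b M)
    (hMN : M ⊆ N) : JArc a b N := by
  obtain ⟨γ, h1, h2⟩ := h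
  exact ⟨γ, h1, h2.trans hMN⟩

lemma JArc.symm {Z : Type} [TopologicalSpace Z] {a b : Z} {M : Set Z} (h : JArc a b M) :
    JArc b a M := by
  obtain ⟨γ, h1, h2⟩ := h
  refine ⟨γ.symm, ?_, by rwa [Path.symm_range]⟩
  intro s t hst
  simp only [Path.symm_apply] at hst
  exact unitInterval.symm_bijective.1 (h1 hst)

lemma JArc.trans {Z : Type} [TopologicalSpace Z] {a b c : Z} {M N : Set Z} (h : JArc a b M)
    (h' : JArc b c N) (hMN : ∀ z ∈ M, z ∈ N → z = b) : JArc a c (M ∪ N) := by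
  obtain ⟨γ, h1, h2⟩ := h
  obtain ⟨γ', h1', h2'⟩ := h'
  refine ⟨γ.trans γ', ?_, by rw [Path.trans_range]; exact union_subset_union h2 h2'⟩
  have cross : ∀ s t : unitInterval, (s : ℝ) ≤ 1 / 2 → ¬ (t : ℝ) ≤ 1 / 2 →
      (γ.trans γ') s ≠ (γ.trans γ') t := by
    intro s t hs ht hst
    rw [Path.trans_apply, Path.trans_apply, dif_pos hs, dif_neg ht] at hst
    have hb := hMN _ (h2 ⟨_, rfl⟩) (hst ▸ h2' ⟨_, rfl⟩)
    rw [hst] at hb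
    have := h1' (hb.trans γ'.source.symm)
    rw [Subtype.ext_iff] at this
    simp at this
    apply ht
    linarith
  intro s t hst
  by_cases hs : (s : ℝ) ≤ 1 / 2 <;> by_cases ht : (t : ℝ) ≤ 1 / 2
  · rw [Path.trans_apply, Path.trans_apply, dif_pos hs, dif_pos ht] at hst
    have := h1 hst
    rw [Subtype.ext_iff] at this ⊢
    simpa using this
  · exact absurd hst (cross s t hs ht)
  · exact absurd hst.symm (cross t s ht hs)
  · rw [Path.trans_apply, Path.trans_apply, dif_neg hs, dif_neg ht] at hst
    have := h1' hst
    rw [Subtype.ext_iff] at this ⊢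
    simpa using this

lemma JC.trans {Z : Type} [TopologicalSpace Z] {a b c : Z} {M N : Set Z} (h : JC a b M)
    (h' : JC b c N) (hMN : ∀ z ∈ M, z ∈ N → z = b) : JC a c (M ∪ N) := by
  rcases h with rfl | h
  · exact h'.imp id fun h => h.mono subset_union_right
  · rcases h' with rfl | h'
    · exact Or.inr (h.mono subset_union_left)
    · exact Or.inr (h.trans h' hMN)

lemma JC.symm {Z : Type} [TopologicalSpace Z] {a b : Z} {M : Set Z} (h : JC a b M) : JC b a M :=
  h.imp Eq.symm JArc.symm

lemma JArc_seg (e : GEdge X) {s t : unitInterval} (hst : s < t) :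
    JArc (φ e s) (φ e t) (φ e '' Icc s t) := by
  have hst' : (s : ℝ) < t := hst
  have hmem : ∀ u : unitInterval, (s : ℝ) + u * (t - s) ∈ Icc (s : ℝ) t := by
    intro u
    have h0 := u.2.1
    have h1 := u.2.2
    constructor <;> nlinarith
  let g : unitInterval → unitInterval := fun u => ⟨s + u * (t - s),
    s.2.1.trans (hmem u).1, (hmem u).2.trans t.2.2⟩
  have hg : Continuous g := by fun_prop
  refine ⟨⟨⟨fun u => φ e (g u), (continuous_φ e).comp hg⟩, ?_, ?_⟩, ?_, ?_⟩
  · simp [g]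
  · simp [g]
  · intro u w h
    have := φ_inj e h
    rw [Subtype.ext_iff] at this ⊢
    have h3 : (u : ℝ) * (t - s) = w * (t - s) := by simpa [g] using this
    exact mul_right_cancel₀ (by linarith) h3
  · rintro _ ⟨u, rfl⟩
    exact ⟨g u, ⟨(hmem u).1, (hmem u).2⟩, rfl⟩

/-! the neighbourhoods -/

instance locConn_unitInterval : LocallyConnectedSpace unitInterval :=
  (isQuotientMap_projIcc (h := zero_le_one (α := ℝ))).isCoinducing.locallyConnectedSpace


def PQ (U : Set (GX X)) (V : Set X) (e : GEdge X) : Set unitInterval :=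
  {t | src e ∈ V ∧ t ∈ connectedComponentIn (φ e ⁻¹' U) 0} ∪
  {t | tgt e ∈ V ∧ t ∈ connectedComponentIn (φ e ⁻¹' U) 1}

def NN (U : Set (GX X)) (V : Set X) : Set (GX X) := mkU V (PQ U V)

lemma full_PQ {U : Set (GX X)} {V : Set X} (hVU : ∀ y ∈ V, i y ∈ U) {e : GEdge X}
    (he : src e ∈ V ∨ tgt e ∈ V) (h : ∀ t, m e t ∈ U) (t : GInt) : t.1 ∈ PQ U V e := by
  have ht0 := t.2.1
  have ht1 := t.2.2
  rcases he with he | he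
  · refine Or.inl ⟨he, ?_⟩
    refine (isPreconnected_Icc (a := (0 : unitInterval)) (b := t.1)).subset_connectedComponentIn
      (left_mem_Icc.2 bot_le) ?_ (right_mem_Icc.2 bot_le)
    intro s hs
    rw [mem_preimage]
    rcases φ_cases e s with ⟨hs', h'⟩ | ⟨hs', h'⟩ | ⟨r, hs', h'⟩ <;> rw [h']
    · exact hVU _ he
    · exact absurd (le_antisymm unitInterval.le_one' (hs' ▸ hs.2)) ht1
    · exact h r
  · refine Or.inr ⟨he, ?_⟩
    refine (isPreconnected_Icc (a := t.1) (b := (1 : unitInterval))).subset_connectedComponentIn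
      (right_mem_Icc.2 unitInterval.le_one') ?_ (left_mem_Icc.2 unitInterval.le_one')
    intro s hs
    rw [mem_preimage]
    rcases φ_cases e s with ⟨hs', h'⟩ | ⟨hs', h'⟩ | ⟨r, hs', h'⟩ <;> rw [h']
    · exact absurd (le_antisymm (hs' ▸ hs.1) unitInterval.nonneg') ht0
    · exact hVU _ he
    · exact h r

lemma isOpen_NN {U : Set (GX X)} (hU : IsOpen U) {V : Set X} (hV : IsOpen V)
    (hVU : ∀ y ∈ V, i y ∈ U)
    (hf : {e | (src e ∈ V ∨ tgt e ∈ V) ∧ ∃ t, m e t ∉ U}.Finite) : IsOpen (NN U V) := by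
  refine isOpen_mkU hV ?_ ?_ ?_ (hf.subset ?_)
  · intro e
    refine IsOpen.union ?_ ?_
    · by_cases h : src e ∈ V
      · simpa [h] using (hU.1 e).connectedComponentIn
      · simp [h]
    · by_cases h : tgt e ∈ V
      · simpa [h] using (hU.1 e).connectedComponentIn
      · simp [h]
  · intro e he
    exact Or.inl ⟨he, mem_connectedComponentIn (by rw [mem_preimage, φ_zero]; exact hVU _ he)⟩
  · intro e he
    exact Or.inr ⟨he, mem_connectedComponentIn (by rw [mem_preimage, φ_one]; exact hVU _ he)⟩
  · rintro e ⟨he, t, ht⟩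
    refine ⟨he, ?_⟩
    by_contra hcon
    push Not at hcon
    exact ht (full_PQ hVU he hcon t)

lemma NN_subset {U : Set (GX X)} {V : Set X} (hVU : ∀ y ∈ V, i y ∈ U) : NN U V ⊆ U := by
  rintro z (⟨x, hx, rfl⟩ | ⟨e, t, rfl, h | h⟩)
  · exact hVU x hx
  · simpa [φ_int] using connectedComponentIn_subset _ _ h.2
  · simpa [φ_int] using connectedComponentIn_subset _ _ h.2

def Leg (N : Set (GX X)) (u : GX X) (x : X) (L : Set (GX X)) : Prop :=
  L ⊆ N ∧ JC u (i x) L ∧ (∀ v, i v ∈ L → v = x) ∧ FT L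

lemma leg_i {N : Set (GX X)} {x : X} (hx : i x ∈ N) : Leg N (i x) x {i x} := by
  refine ⟨by simpa using hx, Or.inl rfl, fun v hv => by simpa using hv, ?_, ?_⟩
  · simp
  · simp

lemma leg_src {U : Set (GX X)} {V : Set X} {e : GEdge X} {t : GInt} (he : src e ∈ V)
    (ht : t.1 ∈ connectedComponentIn (φ e ⁻¹' U) 0) :
    Leg (NN U V) (m e t) (src e) (φ e '' Icc 0 t.1) := by
  have h0 : (0 : unitInterval) ∈ connectedComponentIn (φ e ⁻¹' U) 0 :=
    mem_connectedComponentIn (connectedComponentIn_nonempty_iff.1 ⟨_, ht⟩)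
  have hsub := isPreconnected_connectedComponentIn.Icc_subset h0 ht
  have hi : ∀ v, i v ∈ φ e '' Icc 0 t.1 → v = src e := by
    rintro v ⟨s, hs, hsv⟩
    rcases φ_cases e s with ⟨hs', h'⟩ | ⟨hs', h'⟩ | ⟨r, hs', h'⟩ <;> rw [h'] at hsv
    · simpa using hsv.symm
    · exact absurd (le_antisymm unitInterval.le_one' (hs' ▸ hs.2)) t.2.2
    · cases hsv
  refine ⟨?_, Or.inr ?_, hi, (FT_range e).mono (image_subset_range _ _)⟩
  · rintro z ⟨s, hs, rfl⟩
    rcases φ_cases e s with ⟨hs', h'⟩ | ⟨hs', h'⟩ | ⟨r, hs', h'⟩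
    · rw [h']; exact i_mem_mkU.2 he
    · exact absurd (le_antisymm unitInterval.le_one' (hs' ▸ hs.2)) t.2.2
    · rw [h']
      refine m_mem_mkU.2 (Or.inl ⟨he, ?_⟩)
      rw [hs']
      exact hsub hs
  · have := (JArc_seg e (unitInterval.pos_iff_ne_zero.2 t.2.1)).symm
    rwa [φ_zero, φ_int] at this

lemma leg_tgt {U : Set (GX X)} {V : Set X} {e : GEdge X} {t : GInt} (he : tgt e ∈ V)
    (ht : t.1 ∈ connectedComponentIn (φ e ⁻¹' U) 1) :
    Leg (NN U V) (m e t) (tgt e) (φ e '' Icc t.1 1) := by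
  have h0 : (1 : unitInterval) ∈ connectedComponentIn (φ e ⁻¹' U) 1 :=
    mem_connectedComponentIn (connectedComponentIn_nonempty_iff.1 ⟨_, ht⟩)
  have hsub := isPreconnected_connectedComponentIn.Icc_subset ht h0
  have hi : ∀ v, i v ∈ φ e '' Icc t.1 1 → v = tgt e := by
    rintro v ⟨s, hs, hsv⟩
    rcases φ_cases e s with ⟨hs', h'⟩ | ⟨hs', h'⟩ | ⟨r, hs', h'⟩ <;> rw [h'] at hsv
    · exact absurd (le_antisymm (hs' ▸ hs.1) unitInterval.nonneg') t.2.1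
    · simpa using hsv.symm
    · cases hsv
  refine ⟨?_, Or.inr ?_, hi, (FT_range e).mono (image_subset_range _ _)⟩
  · rintro z ⟨s, hs, rfl⟩
    rcases φ_cases e s with ⟨hs', h'⟩ | ⟨hs', h'⟩ | ⟨r, hs', h'⟩
    · exact absurd (le_antisymm (hs' ▸ hs.1) unitInterval.nonneg') t.2.1
    · rw [h']; exact i_mem_mkU.2 he
    · rw [h']
      refine m_mem_mkU.2 (Or.inr ⟨he, ?_⟩)
      rw [hs']
      exact hsub hs
  · have := (JArc_seg e (unitInterval.lt_one_iff_ne_one.2 t.2.2))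
    rwa [φ_one, φ_int] at this

lemma combine {U : Set (GX X)} {V : Set X} (hVU : ∀ y ∈ V, i y ∈ U)
    (hf : {e | (src e ∈ V ∨ tgt e ∈ V) ∧ ∃ t, m e t ∉ U}.Finite) {u w : GX X} {x y : X}
    {L L' : Set (GX X)} (hx : x ∈ V) (hy : y ∈ V) (hL : Leg (NN U V) u x L)
    (hL' : Leg (NN U V) w y L') (hd : ∀ e t, m e t ∈ L → m e t ∉ L') :
    ∃ M, M ⊆ NN U V ∧ FT M ∧ JC u w M := by
  obtain ⟨a1, a2, a3, a4⟩ := hL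
  obtain ⟨b1, b2, b3, b4⟩ := hL'
  by_cases hxy : x = y
  · subst hxy
    refine ⟨L ∪ L', union_subset a1 b1, a4.union b4, a2.trans b2.symm ?_⟩
    intro z hz hz'
    cases z with
    | i v => rw [a3 v hz]
    | m e t => exact absurd hz' (hd e t hz)
  · let em : ℕ → GEdge X := fun n => (⟨(x, y), hxy⟩, n)
    have hinj : Function.Injective em := fun n k h => (Prod.ext_iff.1 h).2
    obtain ⟨e, ⟨n, rfl⟩, he⟩ := (infinite_range_of_injective hinj).exists_notMem_finite
      (hf.union (a4.2.union b4.2))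
    have h1 : ∀ t, m (em n) t ∈ U := by
      by_contra hcon
      push Not at hcon
      exact he (Or.inl ⟨Or.inl hx, hcon⟩)
    have h2 : ∀ t, m (em n) t ∉ L := fun t ht => he (Or.inr (Or.inl ⟨t, ht⟩))
    have h3 : ∀ t, m (em n) t ∉ L' := fun t ht => he (Or.inr (Or.inr ⟨t, ht⟩))
    have hseg : JC (i x) (i y) (range (φ (em n))) := by
      refine Or.inr ?_
      have := (JArc_seg (em n) (s := 0) (t := 1) zero_lt_one).mono (image_subset_range _ _)
      rwa [φ_zero, φ_one] at this
    have hM : range (φ (em n)) ⊆ NN U V := by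
      rintro _ ⟨s, rfl⟩
      rcases φ_cases (em n) s with ⟨hs', h'⟩ | ⟨hs', h'⟩ | ⟨r, hs', h'⟩ <;> rw [h']
      · exact i_mem_mkU.2 hx
      · exact i_mem_mkU.2 hy
      · exact m_mem_mkU.2 (full_PQ (e := em n) hVU (Or.inl hx) h1 r)
    refine ⟨L ∪ range (φ (em n)) ∪ L', union_subset (union_subset a1 hM) b1,
      (a4.union (FT_range _)).union b4, (a2.trans hseg ?_).trans b2.symm ?_⟩
    · rintro z hz ⟨s, rfl⟩
      rcases φ_cases (em n) s with ⟨hs', h'⟩ | ⟨hs', h'⟩ | ⟨r, hs', h'⟩ <;> rw [h'] at hz ⊢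
      · rfl
      · rw [a3 _ hz]
      · exact absurd hz (h2 r)
    · intro z hz hz'
      cases z with
      | i v => rw [b3 v hz']
      | m e t =>
        rcases hz with hz | ⟨s, hs⟩
        · exact absurd hz' (hd e t hz)
        · rw [← (φ_eq_m hs).1] at hz'
          exact absurd hz' (h3 t)

lemma exists_leg {U : Set (GX X)} {V : Set X} {u : GX X} (hu : u ∈ NN U V) :
    ∃ x ∈ V, ∃ L, Leg (NN U V) u x L ∧ ∀ e t, m e t ∈ L → ∃ s, u = m e s := by
  have key : ∀ (e : GEdge X) (t : GInt) (s : Set unitInterval) (e' : GEdge X) (t' : GInt), m e' t' ∈ φ e '' s → ∃ s, m e t = m e' s := by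
    rintro e t s e' t' ⟨r, -, hr⟩
    exact ⟨t, by rw [(φ_eq_m hr).1]⟩
  cases u with
  | i x => exact ⟨x, i_mem_mkU.1 hu, _, leg_i hu, fun e t h => by simp at h⟩
  | m e t =>
    rcases m_mem_mkU.1 hu with ⟨h1, h2⟩ | ⟨h1, h2⟩
    · exact ⟨_, h1, _, leg_src h1 h2, key e t _⟩
    · exact ⟨_, h1, _, leg_tgt h1 h2, key e t _⟩

lemma same_edge {U : Set (GX X)} {V : Set X} (hVU : ∀ y ∈ V, i y ∈ U)
    (hf : {e | (src e ∈ V ∨ tgt e ∈ V) ∧ ∃ t, m e t ∉ U}.Finite) {e : GEdge X} {s t : GInt}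
    (hs : m e s ∈ NN U V) (ht : m e t ∈ NN U V) (hst : s.1 < t.1) :
    ∃ M, M ⊆ NN U V ∧ FT M ∧ JC (m e s) (m e t) M := by
  have hseg := JArc_seg e hst
  rw [φ_int, φ_int] at hseg
  rcases m_mem_mkU.1 ht with ⟨h1, h2⟩ | ⟨h1, h2⟩
  · have hl := leg_src h1 h2
    have hsub : φ e '' Icc s.1 t.1 ⊆ φ e '' Icc 0 t.1 := image_mono (Icc_subset_Icc_left bot_le)
    exact ⟨_, hl.1, hl.2.2.2, Or.inr (hseg.mono hsub)⟩
  · rcases m_mem_mkU.1 hs with ⟨h1', h2'⟩ | ⟨h1', h2'⟩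
    · refine combine hVU hf h1' h1 (leg_src h1' h2') (leg_tgt h1 h2) ?_
      rintro e' r ⟨a, ha, har⟩ ⟨b, hb, hbr⟩
      have e1 := (φ_eq_m har).2
      have e2 := (φ_eq_m hbr).2
      rw [e1] at ha
      rw [e2] at hb
      exact absurd (hb.1.trans ha.2) (not_le.2 hst)
    · have hl := leg_tgt h1' h2'
      have hsub : φ e '' Icc s.1 t.1 ⊆ φ e '' Icc s.1 1 :=
        image_mono (Icc_subset_Icc_right unitInterval.le_one')
      exact ⟨_, hl.1, hl.2.2.2, Or.inr (hseg.mono hsub)⟩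

lemma arc_NN [T1Space X] {U : Set (GX X)} {V : Set X} (hVU : ∀ y ∈ V, i y ∈ U)
    (hf : {e | (src e ∈ V ∨ tgt e ∈ V) ∧ ∃ t, m e t ∉ U}.Finite) :
    IsArcConnectedSet (NN U V) := by
  intro u hu w hw hne
  suffices H : ∃ M, M ⊆ NN U V ∧ FT M ∧ JC u w M by
    obtain ⟨M, h1, h2, h3⟩ := H
    obtain ⟨f, f1, f2, f3⟩ := (h3.resolve_left hne).embedding h2
    exact ⟨f, f1, f2.trans h1, f3⟩
  by_cases hcase : ∃ e s t, u = m e s ∧ w = m e t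
  · obtain ⟨e, s, t, rfl, rfl⟩ := hcase
    rcases lt_trichotomy s.1 t.1 with h | h | h
    · exact same_edge hVU hf hu hw h
    · exact absurd (by rw [Subtype.ext h]) hne
    · obtain ⟨M, h1, h2, h3⟩ := same_edge hVU hf hw hu h
      exact ⟨M, h1, h2, h3.symm⟩
  · obtain ⟨x, hx, L, hL, hL2⟩ := exists_leg hu
    obtain ⟨y, hy, L', hL', hL2'⟩ := exists_leg hw
    refine combine hVU hf hx hy hL hL' fun e t h1 h2 => hcase ?_
    obtain ⟨s, hs⟩ := hL2 e t h1
    obtain ⟨s', hs'⟩ := hL2' e t h2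
    exact ⟨e, s, s', hs, hs'⟩

lemma arcwise [T1Space X] : ArcwiseConnected (GX X) := by
  intro u w hne
  have h : ∀ z : GX X, z ∈ NN (univ : Set (GX X)) (univ : Set X) := by
    intro z
    cases z with
    | i x => exact i_mem_mkU.2 trivial
    | m e t => exact m_mem_mkU.2 (full_PQ (U := univ) (V := univ) (e := e) (by simp) (Or.inl (mem_univ _)) (by simp) t)
  obtain ⟨f, h1, -, h2⟩ := arc_NN (U := (univ : Set (GX X))) (V := (univ : Set X)) (by simp)
    (by simp) u (h u) w (h w) hne
  exact ⟨f, h1, h2⟩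

lemma isOpen_image {e : GEdge X} {C : Set unitInterval} (hC : IsOpen C) (h0 : 0 ∉ C) (h1 : 1 ∉ C) :
    IsOpen (φ e '' C) := by
  refine ⟨fun e' => ?_, ?_⟩
  · by_cases h : e' = e
    · subst h
      rwa [preimage_image_eq _ (φ_inj e')]
    · convert isOpen_empty using 1
      ext t
      simp only [mem_preimage, mem_empty_iff_false, iff_false]
      rintro ⟨s, hs, hst⟩
      rcases φ_cases e s with ⟨hs', h'⟩ | ⟨hs', h'⟩ | ⟨r, hs', h'⟩
      · exact h0 (hs' ▸ hs)
      · exact h1 (hs' ▸ hs)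
      · rw [h'] at hst
        exact h (φ_eq_m hst.symm).1
  · rintro x ⟨s, hs, hst⟩
    rcases φ_cases e s with ⟨hs', h'⟩ | ⟨hs', h'⟩ | ⟨r, hs', h'⟩
    · exact absurd (hs' ▸ hs) h0
    · exact absurd (hs' ▸ hs) h1
    · rw [h'] at hst
      cases hst

lemma loc_arcwise [T1Space X] : LocallyArcwiseConnected (GX X) := by
  intro z U' hU'
  obtain ⟨U, hUU', hU, hz⟩ := mem_nhds_iff.1 hU'
  cases z with
  | i x =>
    obtain ⟨V, hV, hxV, h3, h4⟩ := hU.2 x hz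
    exact ⟨NN U V, (isOpen_NN hU hV h3 h4).mem_nhds (i_mem_mkU.2 hxV), (NN_subset h3).trans hUU',
      arc_NN h3 h4⟩
  | m e t =>
    let O : Set unitInterval := φ e ⁻¹' U ∩ {0, 1}ᶜ
    have hO : IsOpen O := (hU.1 e).inter (Set.Finite.isClosed (by simp)).isOpen_compl
    have htO : t.1 ∈ O := ⟨by rw [mem_preimage, φ_int]; exact hz, by
      simpa using t.2⟩
    let C := connectedComponentIn O t.1
    have hCO : C ⊆ O := connectedComponentIn_subset _ _
    refine ⟨φ e '' C, (isOpen_image hO.connectedComponentIn (fun h => (hCO h).2 (by simp))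
      (fun h => (hCO h).2 (by simp))).mem_nhds ⟨t.1, mem_connectedComponentIn htO, φ_int e t⟩,
      ?_, ?_⟩
    · rintro _ ⟨s, hs, rfl⟩
      exact hUU' (hCO hs).1
    · rintro _ ⟨a, ha, rfl⟩ _ ⟨b, hb, rfl⟩ hne
      have key : ∀ a ∈ C, ∀ b ∈ C, a < b → JArc (φ e a) (φ e b) (φ e '' C) := fun a ha b hb hab =>
        (JArc_seg e hab).mono (image_mono
          (isPreconnected_connectedComponentIn.Icc_subset ha hb))
      have hft : FT (φ e '' C) := (FT_range e).mono (image_subset_range _ _)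
      rcases lt_trichotomy a b with h | h | h
      · exact (key a ha b hb h).embedding hft
      · exact absurd (by rw [h]) hne
      · exact (key b hb a ha h).symm.embedding hft

end GX

namespace GX

variable {X : Type} [TopologicalSpace X]

def bO (b : Set X) (F : Finset (GEdge X)) (k : ℕ) (e : GEdge X) : Set unitInterval :=
  {t | (src e ∈ b ∧ (e ∉ F ∨ (t : ℝ) < 1 / ((k : ℝ) + 1))) ∨
    (tgt e ∈ b ∧ (e ∉ F ∨ 1 - 1 / ((k : ℝ) + 1) < (t : ℝ)))}

lemma isOpen_bO {b : Set X} (hb : IsOpen b) (F : Finset (GEdge X)) (k : ℕ) :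
    IsOpen (mkU b (bO b F k)) := by
  have hk : 0 < 1 / ((k : ℝ) + 1) := by positivity
  refine isOpen_mkU hb ?_ ?_ ?_ (F.finite_toSet.subset ?_)
  · intro e
    exact IsOpen.union
      (isOpen_const.and (IsOpen.union (s₁ := {t | e ∉ F}) isOpen_const
        (isOpen_lt continuous_subtype_val continuous_const)))
      (isOpen_const.and (IsOpen.union (s₁ := {t | e ∉ F}) isOpen_const
        (isOpen_lt continuous_const continuous_subtype_val)))
  · intro e he
    exact Or.inl ⟨he, Or.inr (by simpa using hk)⟩
  · intro e he
    refine Or.inr ⟨he, Or.inr ?_⟩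
    have : ((1 : unitInterval) : ℝ) = 1 := rfl
    rw [this]
    linarith
  · rintro e ⟨he, t, ht⟩
    by_contra hF
    have hF' : e ∉ F := hF
    rcases he with he | he
    · exact ht (Or.inl ⟨he, Or.inl hF'⟩)
    · exact ht (Or.inr ⟨he, Or.inl hF'⟩)

lemma germs {U : Set (GX X)} (hU : IsOpen U) (e : GEdge X) :
    ∀ᶠ k : ℕ in Filter.atTop, ∀ t : unitInterval,
      (i (src e) ∈ U → (t : ℝ) < 1 / ((k : ℝ) + 1) → φ e t ∈ U) ∧
      (i (tgt e) ∈ U → 1 - 1 / ((k : ℝ) + 1) < (t : ℝ) → φ e t ∈ U) := by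
  have aux : ∀ a : unitInterval, ∃ ε > 0, φ e a ∈ U → ∀ t : unitInterval,
      dist t a < ε → φ e t ∈ U := by
    intro a
    by_cases ha : φ e a ∈ U
    · obtain ⟨ε, h1, h2⟩ := Metric.isOpen_iff.1 (hU.1 e) a ha
      exact ⟨ε, h1, fun _ t ht => h2 ht⟩
    · exact ⟨1, one_pos, fun h => absurd h ha⟩
  obtain ⟨ε, hε, h0⟩ := aux 0
  obtain ⟨δ, hδ, h1⟩ := aux 1
  rw [φ_zero] at h0
  rw [φ_one] at h1
  have hT := tendsto_one_div_add_atTop_nhds_zero_nat (𝕜 := ℝ)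
  filter_upwards [hT.eventually (gt_mem_nhds hε), hT.eventually (gt_mem_nhds hδ)] with k hk1 hk2 t
  have t0 := t.2.1
  have t1 := t.2.2
  refine ⟨fun h ht => h0 h t ?_, fun h ht => h1 h t ?_⟩
  · rw [Subtype.dist_eq, Real.dist_eq, abs_lt]
    have : ((0 : unitInterval) : ℝ) = 0 := rfl
    rw [this]
    constructor <;> linarith
  · rw [Subtype.dist_eq, Real.dist_eq, abs_lt]
    have : ((1 : unitInterval) : ℝ) = 1 := rfl
    rw [this]
    constructor <;> linarith

lemma tweight_le {c : Cardinal} (hc : ℵ₀ ≤ c) (hX : #X ≤ c) (h : tweight X ≤ c) :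
    tweight (GX X) ≤ c := by
  obtain ⟨B, hB, hB'⟩ := exists_basis_tweight X
  rw [← hB'] at h
  have hE : #(GEdge X) ≤ c := by
    rw [mk_prod, lift_id, lift_id]
    refine mul_le_of_le hc ((mk_subtype_le _).trans ?_) (mk_le_aleph0.trans hc)
    rw [mk_prod, lift_id]
    exact mul_le_of_le hc hX hX
  have hFE : #(Finset (GEdge X)) ≤ c := by
    rcases finite_or_infinite (GEdge X) with hfin | hinf
    · exact mk_le_aleph0.trans hc
    · rw [mk_finset_of_infinite]
      exact hE
  let CB : Set (Set unitInterval) := TopologicalSpace.countableBasis unitInterval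
  have hCB : CB.Countable := TopologicalSpace.countable_countableBasis _
  let g1 : B × Finset (GEdge X) × ℕ → Set (GX X) := fun k => mkU k.1 (bO k.1 k.2.1 k.2.2)
  let g2 : GEdge X × CB → Set (GX X) := fun k => φ k.1 '' (k.2.1 ∩ {0, 1}ᶜ)
  refine tweight_le_of_basis (B := range g1 ∪ range g2)
    (TopologicalSpace.isTopologicalBasis_of_isOpen_of_nhds ?_ ?_) ?_
  · rintro _ (⟨k, rfl⟩ | ⟨k, rfl⟩)
    · exact isOpen_bO (hB.isOpen k.1.2) _ _
    · refine isOpen_image ((TopologicalSpace.isOpen_of_mem_countableBasis k.2.2).inter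
        (Set.Finite.isClosed (by simp)).isOpen_compl) (fun h => h.2 (by simp))
        (fun h => h.2 (by simp))
  · intro z U hz hU
    cases z with
    | i x =>
      obtain ⟨V, hV, hxV, h3, h4⟩ := hU.2 x hz
      obtain ⟨b, hb, hxb, hbV⟩ := hB.exists_subset_of_mem_open hxV hV
      obtain ⟨k, hk⟩ := ((Filter.eventually_all_finset h4.toFinset).2
        fun e _ => germs hU e).exists
      refine ⟨_, Or.inl ⟨(⟨b, hb⟩, h4.toFinset, k), rfl⟩, i_mem_mkU.2 hxb, ?_⟩
      rintro z (⟨y, hy, rfl⟩ | ⟨e, t, rfl, he⟩)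
      · exact h3 y (hbV hy)
      · by_contra hcon
        have heV : src e ∈ V ∨ tgt e ∈ V := he.imp (fun h => hbV h.1) (fun h => hbV h.1)
        have heF : e ∈ h4.toFinset := h4.mem_toFinset.2 ⟨heV, t, hcon⟩
        have hk' := hk e heF t.1
        rw [φ_int] at hk'
        rcases he with ⟨h5, h6⟩ | ⟨h5, h6⟩
        · exact hcon (hk'.1 (h3 _ (hbV h5)) (h6.resolve_left fun h => h heF))
        · exact hcon (hk'.2 (h3 _ (hbV h5)) (h6.resolve_left fun h => h heF))
    | m e t =>
      have ht : t.1 ∈ φ e ⁻¹' U := by rw [mem_preimage, φ_int]; exact hz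
      obtain ⟨C, hC, htC, hCU⟩ := (TopologicalSpace.isBasis_countableBasis
        unitInterval).exists_subset_of_mem_open ht (hU.1 e)
      refine ⟨_, Or.inr ⟨(e, ⟨C, hC⟩), rfl⟩, ⟨t.1, ⟨htC, by simpa using t.2⟩, φ_int e t⟩, ?_⟩
      rintro _ ⟨s, hs, rfl⟩
      exact hCU hs.1
  · refine (mk_union_le _ _).trans (add_le_of_le hc (mk_range_le.trans ?_) (mk_range_le.trans ?_))
    · rw [mk_prod, lift_id, lift_id, mk_prod, lift_id, lift_id]
      exact mul_le_of_le hc h (mul_le_of_le hc hFE (mk_le_aleph0.trans hc))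
    · rw [mk_prod, lift_id, lift_id]
      exact mul_le_of_le hc hE (hCB.le_aleph0.trans hc)

end GX

lemma isPreconnected_of_arc {X : Type} [TopologicalSpace X] {V : Set X}
    (h : IsArcConnectedSet V) : IsPreconnected V := by
  refine isPreconnected_of_forall_pair fun x hx y hy => ?_
  by_cases hxy : x = y
  · subst hxy
    exact ⟨{x}, by simpa using hx, rfl, rfl, isPreconnected_singleton⟩
  · obtain ⟨f, h1, h2, h3, h4⟩ := h x hx y hy hxy
    exact ⟨range f, h2, ⟨0, h3⟩, ⟨1, h4⟩, isPreconnected_range h1.continuous⟩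

lemma connected_of_arcwise {X : Type} [TopologicalSpace X] [Nonempty X]
    (h : ArcwiseConnected X) : ConnectedSpace X := by
  have : IsPreconnected (univ : Set X) := isPreconnected_of_arc fun x _ y _ hxy => by
    obtain ⟨f, h1, h2⟩ := h x y hxy
    exact ⟨f, h1, subset_univ _, h2⟩
  have hp : PreconnectedSpace X := ⟨this⟩
  exact ⟨inferInstance⟩

lemma loc_connected_of_arcwise {X : Type} [TopologicalSpace X]
    (h : LocallyArcwiseConnected X) : LocallyConnectedSpace X := by
  refine locallyConnectedSpace_of_connected_bases (fun _ s => s)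
    (fun x s => s ∈ 𝓝 x ∧ IsPreconnected s) (fun x => ⟨fun U => ?_⟩) (fun x s hs => hs.2)
  constructor
  · intro hU
    obtain ⟨V, h1, h2, h3⟩ := h x U hU
    exact ⟨V, ⟨h1, isPreconnected_of_arc h3⟩, h2⟩
  · rintro ⟨V, ⟨h1, -⟩, h2⟩
    exact Filter.mem_of_superset h1 h2

/-- Theorem 6: if `κ ≤ λ ≤ 2 ^ κ` (both infinite), then there exist two families
`C₁, C₂` of `2 ^ λ` mutually non-homeomorphic compact T₁-spaces of cardinality `κ` and
weight `λ` such that all members of `C₁` are scattered, all members of `C₂` are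
connected and locally connected, and if `κ ≥ 𝔠` all members of `C₂` are moreover
arcwise connected and locally arcwise connected. -/
theorem stmt16 (κ lam : Cardinal) (hκ : ℵ₀ ≤ κ) (h1 : κ ≤ lam) (h2 : lam ≤ 2 ^ κ) :
    ExistsNonHomeoFamily (2 ^ lam) (fun X t =>
      letI := t
      CompactSpace X ∧ T1Space X ∧ #X = κ ∧ tweight X = lam ∧ Scattered X)
    ∧ ExistsNonHomeoFamily (2 ^ lam) (fun X t =>
      letI := t
      CompactSpace X ∧ T1Space X ∧ #X = κ ∧ tweight X = lam ∧
        ConnectedSpace X ∧ LocallyConnectedSpace X ∧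
        (Cardinal.continuum ≤ κ → ArcwiseConnected X ∧ LocallyArcwiseConnected X)) := by

  refine ⟨part1 κ lam hκ h1 h2, ?_⟩
  obtain ⟨ι, F, t, hc, hP, hne⟩ := part1 κ lam hκ h1 h2
  by_cases hcκ : Cardinal.continuum ≤ κ
  · refine ⟨ι, fun j => GX (F j), fun j => inferInstance, hc, ?_, ?_⟩
    · intro j
      obtain ⟨p1, p2, p3, p4, -⟩ := hP j
      have hN : Nonempty (F j) := by
        rw [← mk_ne_zero_iff, p3]
        exact (aleph0_pos.trans_le hκ).ne'
      have hN' : Nonempty (GX (F j)) := hN.map GX.i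
      have q1 : ArcwiseConnected (GX (F j)) := GX.arcwise
      have q2 : LocallyArcwiseConnected (GX (F j)) := GX.loc_arcwise
      refine ⟨inferInstance, inferInstance, ?_, ?_, connected_of_arcwise q1,
        loc_connected_of_arcwise q2, fun _ => ⟨q1, q2⟩⟩
      · rw [GX.card_eq (by rw [p3]; exact hcκ), p3]
      · refine le_antisymm (GX.tweight_le (hκ.trans h1) (by rw [p3]; exact h1) p4.le) ?_
        rw [← p4]
        exact tweight_le_of_inducing GX.isEmbedding_i.isInducing
    · intro j k hjk
      refine ⟨fun h => ?_⟩
      have hu : ∀ j, Uncountable (F j) := fun j => by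
        rw [← aleph0_lt_mk_iff, (hP j).2.2.1]
        exact aleph0_lt_continuum.trans_le hcκ
      have := hu j
      have := hu k
      have := (hP j).1
      have := (hP j).2.1
      have := (hP k).1
      have := (hP k).2.1
      obtain ⟨g⟩ := GX.homeo h
      exact (hne j k hjk).false g
  · refine ⟨ι, fun j => HX (F j), fun j => inferInstance, hc, ?_, ?_⟩
    · intro j
      obtain ⟨p1, p2, p3, p4, -⟩ := hP j
      have hI : Infinite (F j) := by
        rw [infinite_iff, p3]
        exact hκ
      refine ⟨inferInstance, inferInstance, ?_, ?_, inferInstance,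
        inferInstance, fun h => absurd h hcκ⟩
      · rw [HX.card_eq, p3]
      · refine le_antisymm (HX.tweight_le (hκ.trans h1) p4.le) ?_
        rw [← p4]
        exact tweight_le_of_inducing HX.isEmbedding_i.isInducing
    · intro j k hjk
      refine ⟨fun h => ?_⟩
      have := (hP j).1
      have := (hP j).2.1
      have := (hP k).1
      have := (hP k).2.1
      obtain ⟨g⟩ := HX.homeo h
      exact (hne j k hjk).false g
end

section
/- Let κ and λ be infinite cardinals with κ ≤ λ ≤ 2^κ. Then there exist two families C and L of mutually non-homeomorphic pathwise connected, scattered T₀-spaces of cardinality κ and weight λ such that |C| = |L| = 2^λ, all spaces in C are compact, and if κ ≤ 𝔠 (where 𝔠 = 2^{ℵ₀}) or 2^κ < 2^λ, then all spaces in L are locally pathwise connected. -/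
open Cardinal Set Topology

inductive Pt {K I : Type} (A : I → Set K) (J : Set I) : Type
  | c (a : K)
  | d (a : K)
  | s
  | q

namespace Pt

variable {K I : Type} [LinearOrder K] {A : I → Set K} {J J' : Set I}

/-- basic sets of the filter -/
def bas (A : I → Set K) (J : Set I) (t : Finset I) : Set K :=
  {k | ∀ i ∈ t, (k ∈ A i ↔ i ∈ J)}

def Opn (U : Set (Pt A J)) : Prop :=
  (∀ a b, c a ∈ U → b ≤ a → c b ∈ U) ∧ (∀ a b, d a ∈ U → b ≤ a → c b ∈ U) ∧
  (s ∈ U → (∀ b, c b ∈ U) ∧ ∃ t : Finset I, ∀ k ∈ bas A J t, d k ∈ U) ∧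
  (q ∈ U → ∀ x, x ∈ U)

instance : TopologicalSpace (Pt A J) where
  IsOpen := Opn
  isOpen_univ := ⟨by simp, by simp, by simp, by simp⟩
  isOpen_inter := by
    classical
    rintro U V ⟨h1, h2, h3, h4⟩ ⟨g1, g2, g3, g4⟩
    refine ⟨fun a b h hb => ⟨h1 a b h.1 hb, g1 a b h.2 hb⟩,
      fun a b h hb => ⟨h2 a b h.1 hb, g2 a b h.2 hb⟩, fun h => ?_,
      fun h x => ⟨h4 h.1 x, g4 h.2 x⟩⟩
    obtain ⟨e1, t, ht⟩ := h3 h.1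
    obtain ⟨e2, r, hr⟩ := g3 h.2
    exact ⟨fun b => ⟨e1 b, e2 b⟩, t ∪ r, fun k hk =>
      ⟨ht k fun i hi => hk i (Finset.mem_union_left _ hi),
        hr k fun i hi => hk i (Finset.mem_union_right _ hi)⟩⟩
  isOpen_sUnion := by
    intro S hS
    refine ⟨?_, ?_, ?_, ?_⟩
    · rintro a b ⟨U, hU, h⟩ hb
      exact ⟨U, hU, (hS U hU).1 a b h hb⟩
    · rintro a b ⟨U, hU, h⟩ hb
      exact ⟨U, hU, (hS U hU).2.1 a b h hb⟩
    · rintro ⟨U, hU, h⟩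
      obtain ⟨e1, t, ht⟩ := (hS U hU).2.2.1 h
      exact ⟨fun b => ⟨U, hU, e1 b⟩, t, fun k hk => ⟨U, hU, ht k hk⟩⟩
    · rintro ⟨U, hU, h⟩ x
      exact ⟨U, hU, (hS U hU).2.2.2 h x⟩

theorem isOpen_iff (U : Set (Pt A J)) : IsOpen U ↔ Opn U := Iff.rfl

/-- standard open sets -/
def Uc (a : K) : Set (Pt A J) := {x | ∃ b ≤ a, x = c b}
def Ud (a : K) : Set (Pt A J) := {x | x = d a ∨ ∃ b ≤ a, x = c b}
def Us (F : Set K) : Set (Pt A J) := {x | x = s ∨ (∃ b, x = c b) ∨ ∃ b ∈ F, x = d b}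

theorem open_Uc (a : K) : IsOpen (Uc a : Set (Pt A J)) := by
  refine ⟨?_, ?_, ?_, ?_⟩
  · intro x y hx hy
    simp [Uc] at *
    exact hy.trans hx
  all_goals simp [Uc]

theorem open_Ud (a : K) : IsOpen (Ud a : Set (Pt A J)) := by
  refine ⟨?_, ?_, ?_, ?_⟩
  · intro x y hx hy
    simp [Ud] at *
    exact hy.trans hx
  · intro x y hx hy
    simp [Ud] at *
    exact hx ▸ hy
  all_goals simp [Ud]

theorem open_Us_iff (F : Set K) : IsOpen (Us F : Set (Pt A J)) ↔ ∃ t, bas A J t ⊆ F := by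
  constructor
  · rintro ⟨-, -, h, -⟩
    obtain ⟨-, t, ht⟩ := h (Or.inl rfl)
    refine ⟨t, fun k hk => ?_⟩
    have := ht k hk
    simpa [Us] using this
  · rintro ⟨t, ht⟩
    refine ⟨?_, ?_, ?_, ?_⟩
    · simp [Us]
    · simp [Us]
    · intro _
      refine ⟨by simp [Us], t, fun k hk => ?_⟩
      have := ht hk
      simpa [Us] using this
    · simp [Us]

theorem spec_iff {x y : Pt A J} : x ⤳ y ↔ ∀ U : Set (Pt A J), IsOpen U → y ∈ U → x ∈ U :=
  specializes_iff_forall_open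

theorem c_spec_c {a b : K} : (c b : Pt A J) ⤳ c a ↔ b ≤ a := by
  rw [spec_iff]
  constructor
  · intro h
    have := h _ (open_Uc a) ⟨a, le_rfl, rfl⟩
    simpa [Uc] using this
  · intro h U hU ha
    exact hU.1 a b ha h

theorem c_spec_d {a b : K} : (c b : Pt A J) ⤳ d a ↔ b ≤ a := by
  rw [spec_iff]
  constructor
  · intro h
    have := h _ (open_Ud a) (Or.inl rfl)
    simpa [Ud] using this
  · intro h U hU ha
    exact hU.2.1 a b ha h

theorem c_spec_s {b : K} : (c b : Pt A J) ⤳ s := by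
  rw [spec_iff]
  intro U hU h
  exact (hU.2.2.1 h).1 b

theorem spec_q (x : Pt A J) : x ⤳ q := by
  rw [spec_iff]
  intro U hU h
  exact hU.2.2.2 h x

theorem not_spec_c {a : K} {x : Pt A J} (h : x ⤳ c a) : ∃ b ≤ a, x = c b :=
  spec_iff.1 h _ (open_Uc a) ⟨a, le_rfl, rfl⟩

theorem not_spec_d {a : K} {x : Pt A J} (h : x ⤳ d a) : x = d a ∨ ∃ b ≤ a, x = c b :=
  spec_iff.1 h _ (open_Ud a) (Or.inl rfl)

theorem open_Us_univ : IsOpen (Us Set.univ : Set (Pt A J)) :=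
  (open_Us_iff _).2 ⟨∅, subset_univ _⟩

theorem q_spec {x : Pt A J} (h : q ⤳ x) : x = q := by
  cases x with
  | c a => simpa using not_spec_c h
  | d a => simpa using not_spec_d h
  | s => simpa [Us] using spec_iff.1 h _ open_Us_univ (Or.inl rfl)
  | q => rfl

instance : T0Space (Pt A J) := by
  refine ⟨fun x y h => ?_⟩
  have h1 := h.specializes
  have h2 := h.specializes'
  cases y with
  | c a =>
    obtain ⟨b, hb, rfl⟩ := not_spec_c h1
    rw [c_spec_c] at h1 h2
    rw [le_antisymm h1 h2]
  | d a =>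
    obtain rfl | ⟨b, hb, rfl⟩ := not_spec_d h1
    · rfl
    · simpa using not_spec_c h2
  | s =>
    cases x with
    | c a => simpa using not_spec_c h2
    | d a => simpa using not_spec_d h2
    | s => rfl
    | q => exact (q_spec h1).symm
  | q => exact q_spec h2

theorem scat [WellFoundedLT K] : Scattered (Pt A J) := by
  intro S hS
  by_cases hc : ∃ a, c a ∈ S
  · obtain ⟨a, ha, hmin⟩ := WellFounded.has_min (wellFounded_lt : WellFounded ((· < ·) : K → K → Prop))
      {a | c a ∈ S} hc
    refine ⟨c a, ha, Uc a, open_Uc a, ?_⟩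
    ext x
    constructor
    · rintro ⟨⟨b, hb, rfl⟩, hx⟩
      have := hmin b hx
      rw [le_antisymm hb (not_lt.1 this)]; rfl
    · rintro rfl
      exact ⟨⟨a, le_rfl, rfl⟩, ha⟩
  · push Not at hc
    by_cases hd : ∃ a, d a ∈ S
    · obtain ⟨a, ha⟩ := hd
      refine ⟨d a, ha, Ud a, open_Ud a, ?_⟩
      ext x
      constructor
      · rintro ⟨rfl | ⟨b, hb, rfl⟩, hx⟩
        · rfl
        · exact absurd hx (hc b)
      · rintro rfl
        exact ⟨Or.inl rfl, ha⟩
    · push Not at hd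
      by_cases hs : s ∈ S
      · refine ⟨s, hs, Us Set.univ, open_Us_univ, ?_⟩
        ext x
        constructor
        · rintro ⟨rfl | ⟨b, rfl⟩ | ⟨b, hb, rfl⟩, hx⟩
          · rfl
          · exact absurd hx (hc b)
          · exact absurd hx (hd b)
        · rintro rfl
          exact ⟨Or.inl rfl, hs⟩
      · have key : ∀ x ∈ S, x = q := by
          intro x hx
          cases x with
          | c a => exact absurd hx (hc a)
          | d a => exact absurd hx (hd a)
          | s => exact absurd hx hs
          | q => rfl
        obtain ⟨x, hx⟩ := hS
        obtain rfl := key x hx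
        refine ⟨q, hx, Set.univ, isOpen_univ, ?_⟩
        ext y
        constructor
        · rintro ⟨-, hy⟩
          exact key y hy
        · rintro rfl
          exact ⟨trivial, hx⟩

instance : CompactSpace (Pt A J) := by
  refine ⟨fun f hf _ => ⟨q, trivial, ?_⟩⟩
  have : 𝓝 (q : Pt A J) = ⊤ := by
    rw [eq_top_iff]
    intro U hU
    obtain ⟨V, hVU, hV, hq⟩ := mem_nhds_iff.1 hU
    have : U = Set.univ := eq_univ_of_forall fun x => hVU (hV.2.2.2 hq x)
    simp [this]
  rw [ClusterPt, this, top_inf_eq]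
  assumption

theorem exists_gen [WellFoundedLT K] [Nonempty K] : ∃ p : Pt A J, ∀ x, p ⤳ x := by
  obtain ⟨a, ha, hmin⟩ := WellFounded.has_min (wellFounded_lt : WellFounded ((· < ·) : K → K → Prop))
      Set.univ univ_nonempty
  have hmin : ∀ b, a ≤ b := fun b => not_lt.1 (hmin b trivial)
  refine ⟨c a, fun x => ?_⟩
  cases x with
  | c b => exact c_spec_c.2 (hmin b)
  | d b => exact c_spec_d.2 (hmin b)
  | s => exact c_spec_s
  | q => exact spec_q _

theorem pathConn [WellFoundedLT K] [Nonempty K] (U : Set (Pt A J)) (hU : IsOpen U)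
    (hne : U.Nonempty) : IsPathConnected U := by
  obtain ⟨p, hp⟩ := exists_gen (A := A) (J := J)
  obtain ⟨x, hx⟩ := hne
  have hpU : p ∈ U := spec_iff.1 (hp x) U hU hx
  exact ⟨p, hpU, fun {y} hy => (hp y).joinedIn hpU hy⟩

theorem pathConnSp [WellFoundedLT K] [Nonempty K] : PathConnectedSpace (Pt A J) := by
  rw [pathConnectedSpace_iff_univ]
  exact pathConn _ isOpen_univ ⟨q, trivial⟩

theorem locPath [WellFoundedLT K] [Nonempty K] : LocPathConnectedSpace (Pt A J) := by
  refine LocPathConnectedSpace.of_bases (fun x => nhds_basis_opens x) ?_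
  intro x U hU
  exact pathConn U hU.2 ⟨x, hU.1⟩

def eqv : (Pt A J) ≃ (K ⊕ K) ⊕ Bool where
  toFun x := match x with
    | c a => .inl (.inl a)
    | d a => .inl (.inr a)
    | s => .inr true
    | q => .inr false
  invFun x := match x with
    | .inl (.inl a) => c a
    | .inl (.inr a) => d a
    | .inr true => s
    | .inr false => q
  left_inv x := by cases x <;> rfl
  right_inv x := by rcases x with (a | a) | (_ | _) <;> rfl

theorem card_Pt [Infinite K] : #(Pt A J) = #K := by
  rw [Cardinal.mk_congr eqv]
  have h : ℵ₀ ≤ #K := Cardinal.aleph0_le_mk K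
  simp only [mk_sum, Cardinal.lift_id, Cardinal.add_eq_self h]
  refine Cardinal.add_eq_left h (le_trans ?_ h)
  exact (Cardinal.lt_aleph0_of_finite Bool).le

/-- independence -/
def Indep (A : I → Set K) : Prop := ∀ (t : Finset I) (J : Set I), ∃ k, k ∈ bas A J t

theorem weight_le [Infinite K] [Infinite I] (hKI : #K ≤ #I) : tweight (Pt A J) ≤ #I := by
  let g : (K ⊕ K) ⊕ Finset I ⊕ Unit → Set (Pt A J) := fun x => match x with
    | .inl (.inl a) => Uc a
    | .inl (.inr a) => Ud a
    | .inr (.inl t) => Us (bas A J t)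
    | .inr (.inr _) => Set.univ
  have hb : TopologicalSpace.IsTopologicalBasis (range g) := by
    apply TopologicalSpace.isTopologicalBasis_of_isOpen_of_nhds
    · rintro _ ⟨(a | a) | (t | _), rfl⟩
      · exact open_Uc a
      · exact open_Ud a
      · exact (open_Us_iff _).2 ⟨t, subset_rfl⟩
      · exact isOpen_univ
    · intro x U hx hU
      cases x with
      | c a =>
        refine ⟨_, ⟨.inl (.inl a), rfl⟩, ⟨a, le_rfl, rfl⟩, ?_⟩
        rintro _ ⟨b, hb, rfl⟩
        exact hU.1 a b hx hb
      | d a =>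
        refine ⟨_, ⟨.inl (.inr a), rfl⟩, Or.inl rfl, ?_⟩
        rintro _ (rfl | ⟨b, hb, rfl⟩)
        · exact hx
        · exact hU.2.1 a b hx hb
      | s =>
        obtain ⟨e, t, ht⟩ := hU.2.2.1 hx
        refine ⟨_, ⟨.inr (.inl t), rfl⟩, Or.inl rfl, ?_⟩
        rintro _ (rfl | ⟨b, rfl⟩ | ⟨b, hb, rfl⟩)
        · exact hx
        · exact e b
        · exact ht b hb
      | q =>
        exact ⟨_, ⟨.inr (.inr ()), rfl⟩, trivial, fun y _ => hU.2.2.2 hx y⟩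
  refine (csInf_le' ⟨_, hb, rfl⟩ : tweight (Pt A J) ≤ #(range g)).trans ?_
  refine Cardinal.mk_range_le.trans ?_
  have h : ℵ₀ ≤ #I := Cardinal.aleph0_le_mk I
  simp only [mk_sum, Cardinal.lift_id, Cardinal.mk_finset_of_infinite]
  refine Cardinal.add_le_of_le h (Cardinal.add_le_of_le h hKI hKI) (Cardinal.add_le_of_le h le_rfl ?_)
  exact (Cardinal.lt_aleph0_of_finite Unit).le.trans h

theorem mem_of_bas_subset (hA : Indep A) {t : Finset I} {i : I}
    (h : bas A J t ⊆ bas A J {i}) : i ∈ t := by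
  classical
  by_contra hi
  obtain ⟨k, hk⟩ := hA (insert i t) {j | if j = i then j ∉ J else j ∈ J}
  have h1 : k ∈ bas A J t := by
    intro j hj
    have := hk j (Finset.mem_insert_of_mem hj)
    have hne : j ≠ i := fun e => hi (e ▸ hj)
    simpa [hne] using this
  have h2 := h h1 i (by simp)
  have h3 := hk i (by simp)
  simp at h3
  tauto

theorem le_weight [Infinite I] (hA : Indep A) : #I ≤ tweight (Pt A J) := by
  unfold tweight
  refine le_csInf ⟨_, _, TopologicalSpace.isTopologicalBasis_opens, rfl⟩ ?_
  rintro _ ⟨B, hB, rfl⟩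
  by_contra hlt
  push Not at hlt
  have hex : ∀ i, ∃ b : B, s ∈ b.1 ∧ b.1 ⊆ Us (bas A J {i}) := by
    intro i
    obtain ⟨b, hb, h1, h2⟩ := hB.exists_subset_of_mem_open
      (show (s : Pt A J) ∈ Us (bas A J {i}) from Or.inl rfl)
      ((open_Us_iff _).2 ⟨{i}, subset_rfl⟩)
    exact ⟨⟨b, hb⟩, h1, h2⟩
  choose f hf1 hf2 using hex
  obtain ⟨b, hb⟩ := Cardinal.exists_infinite_fiber f hlt
  have hinf : (f ⁻¹' {b}).Infinite := Set.infinite_coe_iff.1 hb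
  obtain ⟨i, hi⟩ := hinf.nonempty
  have hsb : s ∈ b.1 := by
    have := hf1 i
    rwa [show f i = b from hi] at this
  obtain ⟨-, t, ht⟩ := (hB.isOpen b.2).2.2.1 hsb
  refine hinf (t.finite_toSet.subset fun j hj => ?_)
  refine mem_of_bas_subset (J := J) hA fun k hk => ?_
  have := hf2 j
  rw [show f j = b from hj] at this
  have := this (ht k hk)
  simpa [Us] using this

theorem char_c [NoMaxOrder K] (x : Pt A J) :
    (∃ a, x = c a) ↔ ∃ y z, x ⤳ y ∧ x ⤳ z ∧ ¬ y ⤳ z ∧ ¬ z ⤳ y := by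
  constructor
  · rintro ⟨a, rfl⟩
    obtain ⟨b, hb⟩ := exists_gt a
    refine ⟨d a, d b, c_spec_d.2 le_rfl, c_spec_d.2 hb.le, fun h => ?_, fun h => ?_⟩
    · have := not_spec_d h
      simp [hb.ne] at this
    · have := not_spec_d h
      simp [hb.ne'] at this
  · rintro ⟨y, z, h1, h2, h3, h4⟩
    have key : ∀ w : Pt A J, x ⤳ w → (∃ a, x = c a) ∨ w = x ∨ w = s ∨ w = q := by
      intro w hw
      cases w with
      | c a =>
        obtain ⟨b, -, rfl⟩ := not_spec_c hw
        exact Or.inl ⟨b, rfl⟩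
      | d a =>
        obtain rfl | ⟨b, -, rfl⟩ := not_spec_d hw
        · simp
        · exact Or.inl ⟨b, rfl⟩
      | s => simp
      | q => simp
    rcases key y h1 with h | rfl | rfl | rfl
    · exact h
    · exact absurd h2 h3
    · rcases key z h2 with h | rfl | rfl | rfl
      · exact h
      · exact absurd h1 h4
      · exact absurd specializes_rfl h3
      · exact absurd (spec_q _) h3
    · exact absurd (spec_q _) h4

theorem homeo_c [NoMaxOrder K] (h : Pt A J ≃ₜ Pt A J') :
    ∃ f : K → K, StrictMono f ∧ ∀ a, h (c a) = c (f a) := by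
  have hs : ∀ x y, h x ⤳ h y ↔ x ⤳ y := fun x y => h.isInducing.specializes_iff
  have : ∀ a, ∃ b, h (c a) = c b := by
    intro a
    rw [char_c]
    obtain ⟨y, z, h1, h2, h3, h4⟩ := (char_c (c a : Pt A J)).1 ⟨a, rfl⟩
    exact ⟨h y, h z, (hs _ _).2 h1, (hs _ _).2 h2, by rwa [hs], by rwa [hs]⟩
  choose f hf using this
  refine ⟨f, fun a b hab => ?_, hf⟩
  have := (hs (c b) (c a))
  rw [hf, hf, c_spec_c, c_spec_c] at this
  exact not_le.1 (fun h => absurd (this.1 h) (not_le.2 hab))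

theorem homeo_fix [NoMaxOrder K] [WellFoundedLT K] (h : Pt A J ≃ₜ Pt A J') :
    (∀ a, h (c a) = c a) ∧ (∀ a, h (d a) = d a) ∧ h s = s := by
  have hs : ∀ x y, h x ⤳ h y ↔ x ⤳ y := fun x y => h.isInducing.specializes_iff
  obtain ⟨f, hf, hfc⟩ := homeo_c h
  obtain ⟨g, hg, hgc⟩ := homeo_c h.symm
  have hc : ∀ a, h (c a) = c a := by
    intro a
    have h1 : a ≤ f a := hf.le_apply
    have h2 : f a ≤ g (f a) := hg.le_apply
    have h3 : g (f a) = a := by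
      have := hgc (f a)
      rw [← hfc, h.symm_apply_apply] at this
      injection this with this
      exact this.symm
    rw [hfc, le_antisymm (h2.trans h3.le) h1]
  have hq : h q = q := by
    apply q_spec
    obtain ⟨y, hy⟩ := h.surjective q
    have h5 := (hs y q).2 (spec_q y)
    rwa [hy] at h5
  have hcs : ∀ b y, (c b : Pt A J') ⤳ h y ↔ (c b : Pt A J) ⤳ y := by
    intro b y
    rw [← hs, hc]
  have hnc : ∀ y, (∀ a, y ≠ c a) → ∀ a, h y ≠ c a := by
    intro y hy a e
    rw [← hc] at e
    exact hy a (h.injective e)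
  refine ⟨hc, fun a => ?_, ?_⟩
  · have h1 := hnc (d a) (by simp)
    have h2 := fun b => hcs b (d a)
    obtain ⟨b, hb⟩ := exists_gt a
    generalize h (d a) = y at *
    cases y with
    | c b => exact absurd rfl (h1 b)
    | d e =>
      simp only [c_spec_d] at h2
      rw [le_antisymm ((h2 e).1 le_rfl) ((h2 a).2 le_rfl)]
    | s =>
      have := (h2 b).1 c_spec_s
      rw [c_spec_d] at this
      exact absurd this (not_le.2 hb)
    | q =>
      have := (h2 b).1 (spec_q _)
      rw [c_spec_d] at this
      exact absurd this (not_le.2 hb)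
  · have h1 := hnc s (by simp)
    have h2 := fun b => hcs b s
    have h3 : h s ≠ q := by
      rw [← hq]
      intro e
      exact absurd (h.injective e) (by simp)
    generalize h s = y at *
    cases y with
    | c b => exact absurd rfl (h1 b)
    | d a =>
      obtain ⟨b, hb⟩ := exists_gt a
      have := (h2 b).2 c_spec_s
      rw [c_spec_d] at this
      exact absurd this (not_le.2 hb)
    | s => rfl
    | q => exact absurd rfl h3

theorem homeo_open [NoMaxOrder K] [WellFoundedLT K] (h : Pt A J ≃ₜ Pt A J') (F : Set K)
    (hF : ∃ t, bas A J' t ⊆ F) : ∃ t, bas A J t ⊆ F := by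
  rw [← open_Us_iff] at hF ⊢
  have h1 := hF.preimage h.continuous
  obtain ⟨hc, hd, hs⟩ := homeo_fix h
  refine (open_Us_iff F).2 ?_
  obtain ⟨-, t, ht⟩ := h1.2.2.1 (by simp [hs, Us])
  refine ⟨t, fun k hk => ?_⟩
  have := ht k hk
  simpa [hd, Us] using this

theorem homeo_sub [NoMaxOrder K] [WellFoundedLT K] (hA : Indep A) (h : Pt A J ≃ₜ Pt A J') :
    J = J' := by
  classical
  ext i
  obtain ⟨t, ht⟩ := homeo_open h (bas A J' {i}) ⟨{i}, subset_rfl⟩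
  obtain ⟨k, hk⟩ := hA (insert i t) J
  have h1 := ht (show k ∈ bas A J t from fun j hj => hk j (Finset.mem_insert_of_mem hj)) i (by simp)
  have h2 := hk i (by simp)
  rw [← h1, ← h2]

theorem exists_indep (K I : Type) [LinearOrder K] [Infinite K] (h : #I ≤ 2 ^ #K) :
    ∃ A : I → Set K, Indep A := by
  classical
  rw [← Cardinal.mk_set] at h
  obtain ⟨e⟩ := h
  have hc : #K = #(Finset K × Finset (Finset K)) := by
    rw [Cardinal.mk_prod]
    simp only [Cardinal.lift_id, Cardinal.mk_finset_of_infinite]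
    exact (Cardinal.mul_eq_self (Cardinal.aleph0_le_mk K)).symm
  obtain ⟨g⟩ := Cardinal.eq.1 hc
  refine ⟨fun i => {k | (g k).1.filter (· ∈ e i) ∈ (g k).2}, fun t J => ?_⟩
  have hw : ∀ i j, ∃ w, i ≠ j → ¬ (w ∈ e i ↔ w ∈ e j) := by
    intro i j
    by_contra! hcon
    have hne := (hcon (Classical.arbitrary K)).1
    exact hne (e.injective (Set.ext fun w => (hcon w).2))
  choose w hw using hw
  let S : Finset K := (t ×ˢ t).image fun p => w p.1 p.2
  let T : Finset (Finset K) := (t.filter (· ∈ J)).image fun i => S.filter (· ∈ e i)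
  refine ⟨g.symm (S, T), fun i hi => ?_⟩
  simp only [Set.mem_ofPred_eq, Equiv.apply_symm_apply]
  constructor
  · intro hm
    obtain ⟨j, hj, hje⟩ := Finset.mem_image.1 hm
    obtain ⟨hjt, hjJ⟩ := Finset.mem_filter.1 hj
    by_cases hij : j = i
    · exact hij ▸ hjJ
    · exfalso
      have hwS : w j i ∈ S := Finset.mem_image.2 ⟨(j, i), Finset.mem_product.2 ⟨hjt, hi⟩, rfl⟩
      apply hw j i hij
      have := Finset.ext_iff.1 hje (w j i)
      simpa [hwS] using this
  · intro hJ
    exact Finset.mem_image.2 ⟨i, Finset.mem_filter.2 ⟨hi, hJ⟩, rfl⟩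

end Pt

/-- Theorem 7: if `κ ≤ λ ≤ 2 ^ κ` (both infinite), then there exist two families
`C, L` of `2 ^ λ` mutually non-homeomorphic pathwise connected, scattered T₀-spaces of
cardinality `κ` and weight `λ` such that all members of `C` are compact, and, provided
`κ ≤ 𝔠` or `2 ^ κ < 2 ^ λ`, all members of `L` are locally pathwise connected. -/
theorem stmt17 (κ lam : Cardinal) (hκ : ℵ₀ ≤ κ) (h1 : κ ≤ lam) (h2 : lam ≤ 2 ^ κ) :
    ExistsNonHomeoFamily (2 ^ lam) (fun X t =>
      letI := t
      PathConnectedSpace X ∧ Scattered X ∧ T0Space X ∧ #X = κ ∧ tweight X = lam ∧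
        CompactSpace X)
    ∧ ExistsNonHomeoFamily (2 ^ lam) (fun X t =>
      letI := t
      PathConnectedSpace X ∧ Scattered X ∧ T0Space X ∧ #X = κ ∧ tweight X = lam ∧
        ((κ ≤ Cardinal.continuum ∨ (2 : Cardinal) ^ κ < 2 ^ lam) →
          LocPathConnectedSpace X)) := by
  have hK : #κ.ord.ToType = κ := Cardinal.mk_ord_toType κ
  have hI : #lam.out = lam := Cardinal.mk_out lam
  have : Infinite κ.ord.ToType := Cardinal.infinite_iff.2 (hK.symm ▸ hκ)
  have : Infinite lam.out := Cardinal.infinite_iff.2 (hI.symm ▸ hκ.trans h1)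
  have : NoMaxOrder κ.ord.ToType := Cardinal.noMaxOrder hκ
  obtain ⟨A, hA⟩ := Pt.exists_indep κ.ord.ToType lam.out (by rw [hK, hI]; exact h2)
  have hw : ∀ J, tweight (Pt A J) = lam := fun J =>
    (le_antisymm (Pt.weight_le (by rw [hK, hI]; exact h1)) (Pt.le_weight hA)).trans hI
  have hcard : #(Set lam.out) = 2 ^ lam := by rw [Cardinal.mk_set, hI]
  refine ⟨⟨Set lam.out, fun J => Pt A J, fun J => inferInstance, hcard, fun J => ?_, ?_⟩,
    ⟨Set lam.out, fun J => Pt A J, fun J => inferInstance, hcard, fun J => ?_, ?_⟩⟩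
  · exact ⟨Pt.pathConnSp, Pt.scat, inferInstance, Pt.card_Pt.trans hK, hw J, inferInstance⟩
  · exact fun i j hij => ⟨fun h => hij (Pt.homeo_sub hA h)⟩
  · exact ⟨Pt.pathConnSp, Pt.scat, inferInstance, Pt.card_Pt.trans hK, hw J, fun _ => Pt.locPath⟩
  · exact fun i j hij => ⟨fun h => hij (Pt.homeo_sub hA h)⟩
end
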